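/- Let a > 1 and let n ≥ 2 be an integer. Then there exists a constant C > 0, independent of f, such that for every radial function f ∈ C_c^∞(ℝⁿ \ {0}) one has ‖S^a f‖_{L²(Bⁿ, L^∞(B))} ≤ C ‖f‖_{H^{1/4}(ℝⁿ)}. -/

import Mathlib

open MeasureTheory Real
open scoped InnerProductSpace

noncomputable section

/-- The Fourier transform `f̂(ξ) = ∫ e^{-i x·ξ} f(x) dx` on `ℝⁿ`. -/
def FT (n : ℕ) (f : EuclideanSpace ℝ (Fin n) → ℂ) (ξ : EuclideanSpace ℝ (Fin n)) : ℂ :=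
  ∫ x, Complex.exp (-(Complex.I * ((⟪x, ξ⟫_ℝ : ℝ) : ℂ))) * f x

/-- The oscillatory integral `S^a f(x,t) = (2π)^{-n} ∫ e^{i(x·ξ + t|ξ|^a)} f̂(ξ) dξ`. -/
def Sosc (n : ℕ) (a : ℝ) (f : EuclideanSpace ℝ (Fin n) → ℂ)
    (x : EuclideanSpace ℝ (Fin n)) (t : ℝ) : ℂ :=
  (((2 * π) ^ n : ℝ) : ℂ)⁻¹ *
    ∫ ξ, Complex.exp (Complex.I * ((⟪x, ξ⟫_ℝ + t * ‖ξ‖ ^ a : ℝ) : ℂ)) * FT n f ξ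

/-- Van der Corput's first derivative estimate for a phase with monotone derivative. -/
theorem norm_integral_cexp_le_of_deriv_ge {φ φ' φ'' : ℝ → ℝ} {p q δ : ℝ} (hpq : p ≤ q) (hδ : 0 < δ)
    (h1 : ∀ x ∈ Set.Icc p q, HasDerivAt φ (φ' x) x)
    (h2 : ∀ x ∈ Set.Icc p q, HasDerivAt φ' (φ'' x) x)
    (hc : ContinuousOn φ'' (Set.Icc p q))
    (hs : (∀ x ∈ Set.Icc p q, 0 ≤ φ'' x) ∨ (∀ x ∈ Set.Icc p q, φ'' x ≤ 0))
    (hl : ∀ x ∈ Set.Icc p q, δ ≤ |φ' x|) :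
    ‖∫ x in p..q, Complex.exp (Complex.I * (φ x : ℂ))‖ ≤ 4 / δ := by
  have hne : ∀ x ∈ Set.Icc p q, φ' x ≠ 0 := fun x hx h ↦ by
    have := hl x hx
    rw [h, abs_zero] at this
    linarith
  have hcφ : ContinuousOn φ (Set.Icc p q) := fun x hx ↦ (h1 x hx).continuousAt.continuousWithinAt
  have hcφ' : ContinuousOn φ' (Set.Icc p q) := fun x hx ↦ (h2 x hx).continuousAt.continuousWithinAt
  set v : ℝ → ℂ := fun x ↦ Complex.exp (Complex.I * (φ x : ℂ)) with hv
  have hvn : ∀ x, ‖v x‖ = 1 := fun x ↦ by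
    rw [hv]; simp only; rw [mul_comm]; exact Complex.norm_exp_ofReal_mul_I _
  have hcv : ContinuousOn v (Set.Icc p q) := by
    apply Continuous.comp_continuousOn Complex.continuous_exp
    exact continuousOn_const.mul (Complex.continuous_ofReal.comp_continuousOn hcφ)
  set g : ℝ → ℝ := fun x ↦ φ'' x / φ' x ^ 2 with hg
  have hcg : ContinuousOn g (Set.Icc p q) :=
    hc.div (hcφ'.pow 2) (fun x hx ↦ pow_ne_zero 2 (hne x hx))
  have hdinv : ∀ x ∈ Set.Icc p q, HasDerivAt (fun y ↦ -(φ' y)⁻¹) (g x) x := fun x hx ↦ by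
    have := ((h2 x hx).inv (hne x hx)).neg
    refine this.congr_deriv ?_
    simp only [hg]; ring
  have hder : ∀ x ∈ Set.Icc p q,
      HasDerivAt (fun y ↦ Complex.I * ((-(φ' y)⁻¹ : ℝ) : ℂ) * v y)
        (Complex.I * (g x : ℂ) * v x + v x) x := fun x hx ↦ by
    have a1 : HasDerivAt v (v x * (Complex.I * (φ' x : ℂ))) x :=
      (((h1 x hx).ofReal_comp).const_mul Complex.I).cexp
    have a2 := (((hdinv x hx).ofReal_comp).const_mul Complex.I).mul a1
    refine a2.congr_deriv ?_
    have : (φ' x : ℂ) ≠ 0 := by exact_mod_cast hne x hx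
    push_cast
    field_simp
    linear_combination (- v x) * Complex.I_sq
  have hu : Set.uIcc p q = Set.Icc p q := Set.uIcc_of_le hpq
  have hcIv : ContinuousOn (fun x ↦ Complex.I * (g x : ℂ) * v x) (Set.Icc p q) :=
    (continuousOn_const.mul (Complex.continuous_ofReal.comp_continuousOn hcg)).mul hcv
  have i1 : IntervalIntegrable (fun x ↦ Complex.I * (g x : ℂ) * v x) volume p q :=
    ContinuousOn.intervalIntegrable (hu ▸ hcIv)
  have i2 : IntervalIntegrable v volume p q := ContinuousOn.intervalIntegrable (hu ▸ hcv)
  have i3 : IntervalIntegrable g volume p q := ContinuousOn.intervalIntegrable (hu ▸ hcg)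
  have key := intervalIntegral.integral_eq_sub_of_hasDerivAt (hu ▸ hder) (i1.add i2)
  rw [intervalIntegral.integral_add i1 i2] at key
  have keyg := intervalIntegral.integral_eq_sub_of_hasDerivAt (hu ▸ hdinv) i3
  have hinv : ∀ x ∈ Set.Icc p q, |(φ' x)⁻¹| ≤ 1 / δ := fun x hx ↦ by
    rw [abs_inv, ← one_div]
    exact one_div_le_one_div_of_le hδ (hl x hx)
  have hp := hinv p (Set.left_mem_Icc.2 hpq)
  have hq := hinv q (Set.right_mem_Icc.2 hpq)
  have hgabs : ‖∫ x in p..q, Complex.I * (g x : ℂ) * v x‖ ≤ 2 / δ := by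
    have b1 : ‖∫ x in p..q, Complex.I * (g x : ℂ) * v x‖ ≤ ∫ x in p..q, |g x| := by
      refine (intervalIntegral.norm_integral_le_integral_norm hpq).trans (le_of_eq ?_)
      refine intervalIntegral.integral_congr fun x _ ↦ ?_
      simp [hvn]
    have b2 : ∫ x in p..q, |g x| = |∫ x in p..q, g x| := by
      rcases hs with hs | hs
      · have : ∀ x ∈ Set.Icc p q, 0 ≤ g x := fun x hx ↦ div_nonneg (hs x hx) (sq_nonneg _)
        rw [abs_of_nonneg (intervalIntegral.integral_nonneg hpq this)]
        refine intervalIntegral.integral_congr fun x hx ↦ ?_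
        exact abs_of_nonneg (this x (hu ▸ hx))
      · have : ∀ x ∈ Set.Icc p q, g x ≤ 0 :=
          fun x hx ↦ div_nonpos_of_nonpos_of_nonneg (hs x hx) (sq_nonneg _)
        have hn : 0 ≤ ∫ x in p..q, -g x :=
          intervalIntegral.integral_nonneg hpq fun x hx ↦ neg_nonneg.2 (this x hx)
        rw [intervalIntegral.integral_neg] at hn
        rw [abs_of_nonpos (by linarith), ← intervalIntegral.integral_neg]
        refine intervalIntegral.integral_congr fun x hx ↦ ?_
        exact abs_of_nonpos (this x (hu ▸ hx))
    rw [b2, keyg] at b1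
    refine b1.trans ((abs_sub _ _).trans ?_)
    rw [abs_neg, abs_neg]
    calc _ ≤ 1 / δ + 1 / δ := add_le_add hq hp
      _ = 2 / δ := by ring
  have hb : ∀ x, ‖Complex.I * ((-(φ' x)⁻¹ : ℝ) : ℂ) * v x‖ = |(φ' x)⁻¹| := fun x ↦ by
    rw [norm_mul, norm_mul, hvn, Complex.norm_I, Complex.norm_real, norm_neg, Real.norm_eq_abs]
    ring
  have e : ∫ x in p..q, v x = (Complex.I * ((-(φ' q)⁻¹ : ℝ) : ℂ) * v q -
      Complex.I * ((-(φ' p)⁻¹ : ℝ) : ℂ) * v p) - ∫ x in p..q, Complex.I * (g x : ℂ) * v x := by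
    rw [← key]; ring
  rw [e]
  refine (norm_sub_le _ _).trans ((add_le_add ((norm_sub_le _ _).trans
    (add_le_add (hb q).le (hb p).le)) hgabs).trans ?_)
  calc _ ≤ 1 / δ + 1 / δ + 2 / δ := by gcongr
    _ = 4 / δ := by ring

/-- Van der Corput's first derivative estimate for a phase with concave derivative. -/
theorem norm_integral_cexp_le_of_antitoneOn {φ φ' φ'' : ℝ → ℝ} {p q δ : ℝ} (hpq : p ≤ q)
    (hδ : 0 < δ)
    (h1 : ∀ x ∈ Set.Icc p q, HasDerivAt φ (φ' x) x)
    (h2 : ∀ x ∈ Set.Icc p q, HasDerivAt φ' (φ'' x) x)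
    (hc : ContinuousOn φ'' (Set.Icc p q)) (hs : AntitoneOn φ'' (Set.Icc p q))
    (hl : ∀ x ∈ Set.Icc p q, δ ≤ |φ' x|) :
    ‖∫ x in p..q, Complex.exp (Complex.I * (φ x : ℂ))‖ ≤ 8 / δ := by
  have h48 : 4 / δ ≤ 8 / δ := by gcongr; norm_num
  have hpm := Set.left_mem_Icc.2 hpq
  have hqm := Set.right_mem_Icc.2 hpq
  rcases le_total (φ'' p) 0 with hp | hp
  · exact (norm_integral_cexp_le_of_deriv_ge hpq hδ h1 h2 hc
      (Or.inr fun x hx ↦ (hs hpm hx hx.1).trans hp) hl).trans h48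
  rcases le_total 0 (φ'' q) with hq | hq
  · exact (norm_integral_cexp_le_of_deriv_ge hpq hδ h1 h2 hc
      (Or.inl fun x hx ↦ hq.trans (hs hx hqm hx.2)) hl).trans h48
  obtain ⟨r, hr, hr0⟩ := intermediate_value_Icc' hpq hc ⟨hq, hp⟩
  have s1 : Set.Icc p r ⊆ Set.Icc p q := Set.Icc_subset_Icc_right hr.2
  have s2 : Set.Icc r q ⊆ Set.Icc p q := Set.Icc_subset_Icc_left hr.1
  have e1 := norm_integral_cexp_le_of_deriv_ge hr.1 hδ (fun x hx ↦ h1 x (s1 hx))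
    (fun x hx ↦ h2 x (s1 hx)) (hc.mono s1)
    (Or.inl fun x hx ↦ hr0 ▸ hs (s1 hx) hr hx.2) (fun x hx ↦ hl x (s1 hx))
  have e2 := norm_integral_cexp_le_of_deriv_ge hr.2 hδ (fun x hx ↦ h1 x (s2 hx))
    (fun x hx ↦ h2 x (s2 hx)) (hc.mono s2)
    (Or.inr fun x hx ↦ hr0 ▸ hs hr (s2 hx) hx.1) (fun x hx ↦ hl x (s2 hx))
  have hcv : ContinuousOn (fun x ↦ Complex.exp (Complex.I * (φ x : ℂ))) (Set.Icc p q) := by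
    apply Continuous.comp_continuousOn Complex.continuous_exp
    exact continuousOn_const.mul (Complex.continuous_ofReal.comp_continuousOn
      fun x hx ↦ (h1 x hx).continuousAt.continuousWithinAt)
  rw [← intervalIntegral.integral_add_adjacent_intervals
    (ContinuousOn.intervalIntegrable ((Set.uIcc_of_le hr.1).symm ▸ hcv.mono s1))
    (ContinuousOn.intervalIntegrable ((Set.uIcc_of_le hr.2).symm ▸ hcv.mono s2))]
  calc _ ≤ 4 / δ + 4 / δ := (norm_add_le _ _).trans (add_le_add e1 e2)
    _ = 8 / δ := by ring

theorem exists_mul_min_le_mul_abs_one_sub_rpow {b : ℝ} (hb : 0 < b) :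
    ∃ c > 0, ∀ y : ℝ, 0 ≤ y → c * min y |1 - y| ≤ y * |1 - y ^ b| := by
  refine ⟨min 1 b / 2, by positivity, fun y hy ↦ ?_⟩
  have hm1 : min 1 b ≤ 1 := min_le_left _ _
  have hmb : min 1 b ≤ b := min_le_right _ _
  have hm0 : 0 < min 1 b := by positivity
  rcases le_total y 1 with h | h
  · have h1 : min 1 b * (1 - y) ≤ 1 - y ^ b := by
      rcases le_total b 1 with hb1 | hb1
      · have := rpow_one_add_le_one_add_mul_self (s := y - 1) (by linarith) hb.le hb1
        rw [add_sub_cancel] at this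
        rw [min_eq_right hb1]; linarith
      · rw [min_eq_left hb1]
        have := Real.rpow_le_rpow_of_exponent_ge' hy h zero_le_one hb1
        rw [Real.rpow_one] at this; linarith
    have h2 : y ^ b ≤ 1 := Real.rpow_le_one hy h hb.le
    rw [abs_of_nonneg (by linarith), abs_of_nonneg (by linarith)]
    refine le_trans ?_ (mul_le_mul_of_nonneg_left h1 hy)
    have h3 : min y (1 - y) ≤ 2 * (y * (1 - y)) := by
      rcases le_total y (1 - y) with h4 | h4
      · rw [min_eq_left h4]; nlinarith
      · rw [min_eq_right h4]; nlinarith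
    nlinarith
  · have h1 : 1 ≤ y ^ b := Real.one_le_rpow h hb.le
    rw [abs_of_nonpos (by linarith), abs_of_nonpos (by linarith)]
    have := one_add_mul_self_le_rpow_one_add (s := y - 1) (by linarith) (p := b + 1) (by linarith)
    rw [add_sub_cancel, Real.rpow_add_one (by linarith)] at this
    have h3 : min y (-(1 - y)) ≤ y - 1 := (min_le_right _ _).trans (by linarith)
    nlinarith

theorem norm_integral_le_of_forall_far {h : ℝ → ℂ} (hc : Continuous h) (hn : ∀ x, ‖h x‖ ≤ 1)
    {d e L : ℝ} (hd : 0 < d) (hL : 0 ≤ L)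
    (hfar : ∀ p q : ℝ, p ≤ q → d ≤ p → (∀ x ∈ Set.Icc p q, d ≤ |x - e|) →
      ‖∫ x in p..q, h x‖ ≤ L) {N : ℝ} (hN : 0 ≤ N) :
    ‖∫ x in (0 : ℝ)..N, h x‖ ≤ 3 * d + 2 * L := by
  have triv : ∀ p q : ℝ, ‖∫ x in p..q, h x‖ ≤ |q - p| := fun p q ↦ by
    simpa using intervalIntegral.norm_integral_le_of_norm_le_const (a := p) (b := q) (C := 1)
      (f := h) (fun x _ ↦ hn x)
  have hi : ∀ p q : ℝ, IntervalIntegrable h volume p q := fun p q ↦ hc.intervalIntegrable p q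
  rcases le_total N d with hNd | hdN
  · have := triv 0 N
    rw [sub_zero, abs_of_nonneg hN] at this
    linarith
  set p := max d (min (e - d) N) with hp
  set q := max d (min (e + d) N) with hq
  have hpq : p ≤ q := max_le_max le_rfl (min_le_min (by linarith) le_rfl)
  have hqN : q ≤ N := max_le hdN (min_le_right _ _)
  have hdp : d ≤ p := le_max_left _ _
  have i1 : ‖∫ x in (0 : ℝ)..d, h x‖ ≤ d := by
    have := triv 0 d
    rwa [sub_zero, abs_of_pos hd] at this
  have i2 : ‖∫ x in d..p, h x‖ ≤ L := by
    rcases eq_or_lt_of_le hdp with hh | hh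
    · rw [← hh]; simpa using hL
    · refine hfar d p hdp le_rfl fun x hx ↦ ?_
      have : p ≤ e - d := by
        rcases le_max_iff.1 (le_of_eq hp) with h1 | h1
        · linarith
        · exact h1.trans (min_le_left _ _)
      rw [abs_of_nonpos (by linarith [hx.2])]
      linarith [hx.2]
  have i3 : ‖∫ x in p..q, h x‖ ≤ 2 * d := by
    refine (triv p q).trans ?_
    rw [abs_of_nonneg (by linarith)]
    have : q ≤ p + 2 * d := by
      refine max_le (by linarith) ?_
      have h2 : min (e + d) N ≤ min (e - d) N + 2 * d := by
        rw [← min_add_add_right]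
        exact min_le_min (by linarith) (by linarith)
      exact h2.trans (by linarith [le_max_right d (min (e - d) N)])
    linarith
  have i4 : ‖∫ x in q..N, h x‖ ≤ L := by
    rcases eq_or_lt_of_le hqN with hh | hh
    · rw [hh]; simpa using hL
    · refine hfar q N hqN (hdp.trans hpq) fun x hx ↦ ?_
      have : e + d ≤ q := by
        have h1 : min (e + d) N ≤ q := le_max_right _ _
        rcases min_le_iff.1 h1 with h2 | h2
        · exact h2
        · linarith
      rw [abs_of_nonneg (by linarith [hx.1])]
      linarith [hx.1]
  rw [← intervalIntegral.integral_add_adjacent_intervals (hi 0 d) (hi d N),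
    ← intervalIntegral.integral_add_adjacent_intervals (hi d p) (hi p N),
    ← intervalIntegral.integral_add_adjacent_intervals (hi p q) (hi q N)]
  refine (norm_add_le _ _).trans ?_
  have := norm_add_le (∫ x in d..p, h x) ((∫ x in p..q, h x) + ∫ x in q..N, h x)
  have := norm_add_le (∫ x in p..q, h x) (∫ x in q..N, h x)
  linarith

/-- The oscillatory factor obtained from `e^{i(xξ + tξ^a)}` by `ξ = η²`, with `b = 2 * a`. -/
def oscFactor (b x t η : ℝ) : ℂ := Complex.exp (Complex.I * ((x * η ^ 2 + t * η ^ b : ℝ) : ℂ))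

theorem norm_oscFactor (b x t η : ℝ) : ‖oscFactor b x t η‖ = 1 := by
  rw [oscFactor, mul_comm]; exact Complex.norm_exp_ofReal_mul_I _

theorem continuous_oscFactor {b : ℝ} (hb : 0 ≤ b) :
    Continuous fun z : ℝ × ℝ × ℝ ↦ oscFactor b z.1 z.2.1 z.2.2 := by
  unfold oscFactor
  have : Continuous fun z : ℝ × ℝ × ℝ ↦ z.2.2 ^ b :=
    (Real.continuous_rpow_const hb).comp (by fun_prop)
  fun_prop

theorem conj_oscFactor (b x t η : ℝ) :
    (starRingEnd ℂ) (oscFactor b x t η) = oscFactor b (-x) (-t) η := by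
  unfold oscFactor
  rw [← Complex.exp_conj, map_mul, Complex.conj_I, Complex.conj_ofReal]
  congr 1
  push_cast
  ring

theorem oscFactor_mul (b x y t s η : ℝ) :
    oscFactor b x t η * oscFactor b y s η = oscFactor b (x + y) (t + s) η := by
  unfold oscFactor
  rw [← Complex.exp_add]
  congr 1
  push_cast
  ring

theorem norm_integral_oscFactor_le_of_far {b : ℝ} (hb : 2 < b) :
    ∃ c > 0, ∀ x t : ℝ, 0 < x → ∃ e : ℝ, ∀ d p q : ℝ, 0 < d → p ≤ q → d ≤ p →
      (∀ y ∈ Set.Icc p q, d ≤ |y - e|) →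
      ‖∫ η in p..q, oscFactor b x t η‖ ≤ 8 / (2 * x * c * d) := by
  obtain ⟨c, hc, hcy⟩ := exists_mul_min_le_mul_abs_one_sub_rpow (b := b - 2) (by linarith)
  refine ⟨min c 1, by positivity, fun x t hx ↦ ?_⟩
  have D1 : ∀ η : ℝ, 0 < η → HasDerivAt (fun η : ℝ ↦ x * η ^ 2 + t * η ^ b)
      (2 * x * η + t * b * η ^ (b - 1)) η := fun η hη ↦ by
    have := ((hasDerivAt_pow 2 η).const_mul x).add
      ((Real.hasDerivAt_rpow_const (p := b) (Or.inl hη.ne')).const_mul t)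
    refine this.congr_deriv ?_
    push_cast; ring
  have D2 : ∀ η : ℝ, 0 < η → HasDerivAt (fun η : ℝ ↦ 2 * x * η + t * b * η ^ (b - 1))
      (2 * x + t * b * (b - 1) * η ^ (b - 2)) η := fun η hη ↦ by
    have := ((hasDerivAt_id η).const_mul (2 * x)).add
      ((Real.hasDerivAt_rpow_const (p := b - 1) (Or.inl hη.ne')).const_mul (t * b))
    refine this.congr_deriv ?_
    rw [show b - 1 - 1 = b - 2 by ring]; ring
  have hcont : Continuous fun η : ℝ ↦ 2 * x + t * b * (b - 1) * η ^ (b - 2) := by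
    have : Continuous fun η : ℝ ↦ η ^ (b - 2) := Real.continuous_rpow_const (by linarith)
    fun_prop
  have hpow : ∀ η : ℝ, 0 < η → η ^ (b - 1) = η * η ^ (b - 2) := fun η hη ↦ by
    rw [show b - 1 = (b - 2) + 1 by ring, Real.rpow_add_one hη.ne']; ring
  rcases le_or_gt 0 t with ht | ht
  · refine ⟨0, fun d p q hd hpq hdp _ ↦ ?_⟩
    have hpos : ∀ y ∈ Set.Icc p q, 0 < y := fun y hy ↦ by linarith [hy.1]
    refine (norm_integral_cexp_le_of_deriv_ge (δ := 2 * x * min c 1 * d) hpq (by positivity)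
      (fun y hy ↦ D1 y (hpos y hy)) (fun y hy ↦ D2 y (hpos y hy)) hcont.continuousOn
      (Or.inl fun y hy ↦ ?_) (fun y hy ↦ ?_)).trans ?_
    · have := Real.rpow_nonneg (hpos y hy).le (b - 2)
      have h2 : 0 ≤ b * (b - 1) := by nlinarith
      have h3 : 0 ≤ t * (b * (b - 1)) * y ^ (b - 2) := by positivity
      nlinarith
    · have h0 := hpos y hy
      have := Real.rpow_nonneg h0.le (b - 1)
      have h3 : 0 ≤ t * b * y ^ (b - 1) := by positivity
      refine le_trans ?_ (le_abs_self _)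
      have h4 : min c 1 * d ≤ 1 * y := by
        gcongr
        · exact min_le_right _ _
        · linarith [hy.1]
      have : 2 * x * (min c 1 * d) ≤ 2 * x * (1 * y) := by gcongr
      linarith
    · gcongr; norm_num
  · set r := (2 * x / (-t * b)) with hr
    have hr0 : 0 < r := by
      have : 0 < -t := by linarith
      positivity
    set e := r ^ (1 / (b - 2)) with he
    have he0 : 0 < e := Real.rpow_pos_of_pos hr0 _
    have heb : e ^ (b - 2) = r := by
      rw [he, ← Real.rpow_mul hr0.le, one_div, inv_mul_cancel₀ (by linarith), Real.rpow_one]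
    refine ⟨e, fun d p q hd hpq hdp hfar ↦ ?_⟩
    have hpos : ∀ y ∈ Set.Icc p q, 0 < y := fun y hy ↦ by linarith [hy.1]
    refine norm_integral_cexp_le_of_antitoneOn (δ := 2 * x * min c 1 * d) hpq (by positivity)
      (fun y hy ↦ D1 y (hpos y hy)) (fun y hy ↦ D2 y (hpos y hy)) hcont.continuousOn
      (fun y hy z hz hyz ↦ ?_) (fun y hy ↦ ?_)
    · have h1 : y ^ (b - 2) ≤ z ^ (b - 2) :=
        Real.rpow_le_rpow (hpos y hy).le hyz (by linarith)
      have h2 : t * b * (b - 1) ≤ 0 := by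
        have : 0 ≤ b * (b - 1) := by nlinarith
        nlinarith
      have := mul_le_mul_of_nonpos_left h1 h2
      simpa using this
    · have h0 := hpos y hy
      have key := hcy (y / e) (by positivity)
      have e1 : 2 * x * y + t * b * y ^ (b - 1) = 2 * x * e * (y / e * (1 - (y / e) ^ (b - 2))) := by
        rw [hpow y h0, Real.div_rpow h0.le he0.le, heb, hr]
        have : t * b ≠ 0 := mul_ne_zero ht.ne (by linarith)
        field_simp
        ring
      rw [e1, abs_mul (2 * x * e), abs_mul (y / e), abs_of_pos (by positivity : 0 < 2 * x * e),
        abs_of_pos (by positivity : 0 < y / e)]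
      have h5 : d / e ≤ min (y / e) |1 - y / e| := by
        refine le_min (by gcongr; linarith [hy.1]) ?_
        have : |1 - y / e| = |y - e| / e := by
          rw [abs_sub_comm, ← abs_of_pos he0, ← abs_div, abs_of_pos he0]
          congr 1; field_simp
        rw [this]
        have := hfar y hy
        gcongr
      have h6 : min c 1 * (d / e) ≤ c * min (y / e) |1 - y / e| := by
        gcongr
        exact min_le_left _ _
      calc 2 * x * min c 1 * d = 2 * x * e * (min c 1 * (d / e)) := by field_simp
        _ ≤ _ := mul_le_mul_of_nonneg_left (h6.trans key) (by positivity)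

/-- The basic kernel estimate `|∫₀^N e^{i(xη² + tη^b)} dη| ≤ C |x|^{-1/2}`, uniform in `t, N`. -/
theorem exists_norm_integral_oscFactor_le {b : ℝ} (hb : 2 < b) :
    ∃ C > 0, ∀ x t N : ℝ, x ≠ 0 → 0 ≤ N →
      ‖∫ η in (0 : ℝ)..N, oscFactor b x t η‖ ≤ C * |x| ^ (-(1 / 2) : ℝ) := by
  obtain ⟨c, hc, H⟩ := norm_integral_oscFactor_le_of_far hb
  have hpos : ∀ x t N : ℝ, 0 < x → 0 ≤ N →
      ‖∫ η in (0 : ℝ)..N, oscFactor b x t η‖ ≤ (3 + 8 / c) * |x| ^ (-(1 / 2) : ℝ) := by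
    intro x t N hx hN
    obtain ⟨e, he⟩ := H x t hx
    rw [abs_of_pos hx]
    set d := x ^ (-(1 / 2) : ℝ) with hd
    have hd0 : 0 < d := Real.rpow_pos_of_pos hx _
    have hdd : x * d * d = 1 := by
      rw [mul_assoc, hd, ← Real.rpow_add hx]
      norm_num
      rw [Real.rpow_neg_one, mul_inv_cancel₀ hx.ne']
    have hcont : Continuous (oscFactor b x t) :=
      (continuous_oscFactor (b := b) (by linarith)).comp
        (by fun_prop : Continuous fun η : ℝ ↦ ((x, t, η) : ℝ × ℝ × ℝ))
    have := norm_integral_le_of_forall_far (h := oscFactor b x t) hcont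
      (fun η ↦ (norm_oscFactor b x t η).le) (e := e) (L := 8 / (2 * x * c * d)) hd0 (by positivity)
      (fun p q hpq hdp hf ↦ he d p q hd0 hpq hdp hf) hN
    refine this.trans (le_of_eq ?_)
    have : 8 / (2 * x * c * d) = 4 / c * d := by
      field_simp
      linear_combination (-8) * hdd
    rw [this]; ring
  refine ⟨3 + 8 / c, by positivity, fun x t N hx hN ↦ ?_⟩
  rcases lt_or_gt_of_ne hx with hx | hx
  · have := hpos (-x) (-t) N (by linarith) hN
    rw [abs_neg] at this
    refine le_trans (le_of_eq ?_) this
    simp_rw [← conj_oscFactor]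
    rw [intervalIntegral.integral_of_le hN, intervalIntegral.integral_of_le hN, integral_conj,
      RCLike.norm_conj]
  · exact hpos x t N hx hN

section TTstar
variable {X Y : Type*} [MeasurableSpace X] [MeasurableSpace Y]

/-- Schur's test for a symmetric kernel. -/
theorem integral_mul_mul_le_of_symm {ν : Measure X} [IsFiniteMeasure ν] {k : X × X → ℝ}
    {A M : ℝ} (hk0 : ∀ z, 0 ≤ k z) (hksymm : ∀ z, k z.swap = k z) (hki : Integrable k (ν.prod ν))
    (hkA : ∀ᵐ x ∂ν, ∫ x', k (x, x') ∂ν ≤ A) {u : X → ℝ} (hu : Measurable u)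
    (hu0 : ∀ x, 0 ≤ u x) (huM : ∀ x, u x ≤ M) :
    Integrable (fun z : X × X ↦ u z.1 * u z.2 * k z) (ν.prod ν) ∧
    ∫ z : X × X, u z.1 * u z.2 * k z ∂ν.prod ν ≤ A * ∫ x, u x ^ 2 ∂ν := by
  have hM : ∀ x, ‖u x‖ ≤ M := fun x ↦ by rw [Real.norm_of_nonneg (hu0 x)]; exact huM x
  have hprod : Integrable (fun z : X × X ↦ u z.1 * u z.2 * k z) (ν.prod ν) := by
    refine hki.bdd_mul (c := M * M) (by fun_prop) (Filter.Eventually.of_forall fun z ↦ ?_)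
    rw [norm_mul]
    exact mul_le_mul (hM _) (hM _) (norm_nonneg _) ((norm_nonneg _).trans (hM z.1))
  have hsq : Integrable (fun z : X × X ↦ u z.1 ^ 2 * k z) (ν.prod ν) := by
    refine hki.bdd_mul (c := M ^ 2) ((hu.comp measurable_fst).pow_const 2).aestronglyMeasurable
      (Filter.Eventually.of_forall fun z ↦ ?_)
    rw [norm_pow]
    exact pow_le_pow_left₀ (norm_nonneg _) (hM _) 2
  have hsq' : Integrable (fun z : X × X ↦ u z.2 ^ 2 * k z) (ν.prod ν) := by
    have := hsq.swap
    refine this.congr (Filter.Eventually.of_forall fun z ↦ ?_)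
    simp [Function.comp, hksymm]
  have hswap : ∫ z : X × X, u z.2 ^ 2 * k z ∂ν.prod ν = ∫ z : X × X, u z.1 ^ 2 * k z ∂ν.prod ν := by
    rw [← integral_prod_swap]
    refine integral_congr_ae (Filter.Eventually.of_forall fun z ↦ ?_)
    simp [hksymm]
  refine ⟨hprod, ?_⟩
  have h1 : ∫ z : X × X, u z.1 * u z.2 * k z ∂ν.prod ν ≤
      ∫ z : X × X, (1 / 2 * (u z.1 ^ 2 * k z) + 1 / 2 * (u z.2 ^ 2 * k z)) ∂ν.prod ν := by
    refine integral_mono hprod ((hsq.const_mul _).add (hsq'.const_mul _)) fun z ↦ ?_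
    have := mul_nonneg (sq_nonneg (u z.1 - u z.2)) (hk0 z)
    simp only
    nlinarith
  rw [integral_add (hsq.const_mul _) (hsq'.const_mul _), integral_const_mul, integral_const_mul,
    hswap, ← add_mul, add_halves, one_mul, integral_prod _ hsq] at h1
  refine h1.trans ?_
  rw [← integral_const_mul]
  refine integral_mono_ae hsq.integral_prod_left ?_ ?_
  · refine Integrable.const_mul (Integrable.of_bound (C := M ^ 2) (by fun_prop) (Filter.Eventually.of_forall fun z ↦ ?_)) A
    rw [norm_pow]
    exact pow_le_pow_left₀ (norm_nonneg _) (hM _) 2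
  · filter_upwards [hkA] with x hx
    rw [integral_const_mul, mul_comm]
    exact mul_le_mul_of_nonneg_right hx (sq_nonneg _)

/-- The `TT*` method for an operator with bounded kernel `m`. -/
theorem integral_norm_sq_le_of_kernel {ν : Measure X} {μ : Measure Y} [IsFiniteMeasure ν]
    [IsFiniteMeasure μ] {m : X × Y → ℂ} (hm : Measurable m) (hm1 : ∀ z, ‖m z‖ ≤ 1)
    {k : X × X → ℝ} {A : ℝ} (hA : 0 < A)
    (hk0 : ∀ z, 0 ≤ k z) (hksymm : ∀ z, k z.swap = k z) (hki : Integrable k (ν.prod ν))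
    (hkA : ∀ᵐ x ∂ν, ∫ x', k (x, x') ∂ν ≤ A)
    (hK : ∀ᵐ z ∂ν.prod ν, ‖∫ y, m (z.1, y) * (starRingEnd ℂ) (m (z.2, y)) ∂μ‖ ≤ k z)
    {G : Y → ℂ} (hGm : Measurable G) (hG : Integrable G μ)
    (hG2 : Integrable (fun y ↦ ‖G y‖ ^ 2) μ) :
    ∫ x, ‖∫ y, m (x, y) * G y ∂μ‖ ^ 2 ∂ν ≤ A * ∫ y, ‖G y‖ ^ 2 ∂μ := by
  set U : X → ℂ := fun x ↦ ∫ y, m (x, y) * G y ∂μ with hU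
  have hUm : Measurable U := by
    refine StronglyMeasurable.measurable ?_
    refine StronglyMeasurable.integral_prod_right (f := fun x y ↦ m (x, y) * G y) ?_
    exact (hm.mul (hGm.comp measurable_snd)).stronglyMeasurable
  set M : ℝ := ∫ y, ‖G y‖ ∂μ with hM
  have hUM : ∀ x, ‖U x‖ ≤ M := fun x ↦ by
    refine (norm_integral_le_integral_norm _).trans ?_
    refine integral_mono_of_nonneg (Filter.Eventually.of_forall fun y ↦ norm_nonneg _) hG.norm
      (Filter.Eventually.of_forall fun y ↦ ?_)
    simp only
    rw [norm_mul]
    exact mul_le_of_le_one_left (norm_nonneg _) (hm1 _)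
  have hM0 : 0 ≤ M := integral_nonneg fun y ↦ norm_nonneg _
  set V : Y → ℂ := fun y ↦ ∫ x, (starRingEnd ℂ) (U x) * m (x, y) ∂ν with hV
  have hconj : Measurable (starRingEnd ℂ) := Complex.continuous_conj.measurable
  have hUcm : Measurable fun x ↦ (starRingEnd ℂ) (U x) := hconj.comp hUm
  have hVm : Measurable V := by
    refine StronglyMeasurable.measurable ?_
    refine StronglyMeasurable.integral_prod_left (f := fun x y ↦ (starRingEnd ℂ) (U x) * m (x, y)) ?_
    exact ((hUcm.comp measurable_fst).mul hm).stronglyMeasurable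
  have hVM : ∀ y, ‖V y‖ ≤ M * ν.real Set.univ := fun y ↦ by
    refine norm_integral_le_of_norm_le_const (Filter.Eventually.of_forall fun x ↦ ?_)
    rw [norm_mul, RCLike.norm_conj]
    exact (mul_le_of_le_one_right (norm_nonneg _) (hm1 _)).trans (hUM x)
  have hVi : Integrable (fun y ↦ ‖V y‖ ^ 2) μ := by
    refine Integrable.of_bound (C := (M * ν.real Set.univ) ^ 2) (by fun_prop)
      (Filter.Eventually.of_forall fun y ↦ ?_)
    rw [norm_pow, norm_norm]
    exact pow_le_pow_left₀ (norm_nonneg _) (hVM y) 2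
  -- the duality step
  have e1 : ((∫ x, ‖U x‖ ^ 2 ∂ν : ℝ) : ℂ) = ∫ y, V y * G y ∂μ := by
    have i1 : Integrable (fun z : X × Y ↦ (starRingEnd ℂ) (U z.1) * m z * G z.2) (ν.prod μ) := by
      have : Integrable (fun z : X × Y ↦ G z.2) (ν.prod μ) := hG.comp_snd ν
      refine this.bdd_mul (c := M) (((hUcm.comp measurable_fst).mul hm).aestronglyMeasurable)
        (Filter.Eventually.of_forall fun z ↦ ?_)
      rw [norm_mul, RCLike.norm_conj]
      exact (mul_le_of_le_one_right (norm_nonneg _) (hm1 _)).trans (hUM _)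
    have := integral_integral_swap (f := fun x y ↦ (starRingEnd ℂ) (U x) * m (x, y) * G y) i1
    simp_rw [integral_mul_const] at this
    rw [hV]
    simp only
    rw [← this, ← integral_complex_ofReal]
    refine integral_congr_ae (Filter.Eventually.of_forall fun x ↦ ?_)
    simp only [mul_assoc]
    rw [integral_const_mul]
    change _ = (starRingEnd ℂ) (U x) * U x
    rw [Complex.conj_mul']
    simp
  have e2 : ((∫ y, ‖V y‖ ^ 2 ∂μ : ℝ) : ℂ) = ∫ z : X × X, (starRingEnd ℂ) (U z.1) * U z.2 *
      ∫ y, m (z.1, y) * (starRingEnd ℂ) (m (z.2, y)) ∂μ ∂ν.prod ν := by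
    have i1 : Integrable (fun w : Y × X × X ↦ (starRingEnd ℂ) (U w.2.1) * m (w.2.1, w.1) *
        (U w.2.2 * (starRingEnd ℂ) (m (w.2.2, w.1)))) (μ.prod (ν.prod ν)) := by
      refine Integrable.of_bound (C := M * M) ?_ (Filter.Eventually.of_forall fun w ↦ ?_)
      · refine Measurable.aestronglyMeasurable ?_
        exact ((hUcm.comp (by fun_prop)).mul (hm.comp (by fun_prop))).mul
          ((hUm.comp (by fun_prop)).mul (hconj.comp (hm.comp (by fun_prop))))
      · rw [norm_mul, norm_mul, norm_mul, RCLike.norm_conj, RCLike.norm_conj]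
        exact mul_le_mul ((mul_le_of_le_one_right (norm_nonneg _) (hm1 _)).trans (hUM _))
          ((mul_le_of_le_one_right (norm_nonneg _) (hm1 _)).trans (hUM _)) (by positivity) hM0
    have := integral_integral_swap (f := fun (y : Y) (z : X × X) ↦
      (starRingEnd ℂ) (U z.1) * m (z.1, y) * (U z.2 * (starRingEnd ℂ) (m (z.2, y)))) i1
    rw [← integral_complex_ofReal]
    refine (integral_congr_ae (Filter.Eventually.of_forall fun y ↦ ?_)).trans
      (this.trans (integral_congr_ae (Filter.Eventually.of_forall fun z ↦ ?_)))
    · rw [integral_prod_mul (fun x ↦ (starRingEnd ℂ) (U x) * m (x, y))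
        (fun x ↦ U x * (starRingEnd ℂ) (m (x, y)))]
      have : ∫ x, U x * (starRingEnd ℂ) (m (x, y)) ∂ν = (starRingEnd ℂ) (V y) := by
        rw [hV]; simp only; rw [← integral_conj]
        refine integral_congr_ae (Filter.Eventually.of_forall fun x ↦ ?_)
        simp
      rw [this]
      change _ = V y * _
      rw [Complex.mul_conj']
      simp
    · simp only
      rw [← integral_const_mul]
      refine integral_congr_ae (Filter.Eventually.of_forall fun y ↦ ?_)
      simp only
      ring
  obtain ⟨sI, sle⟩ := integral_mul_mul_le_of_symm (M := M) hk0 hksymm hki hkA (u := fun x ↦ ‖U x‖)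
    hUm.norm (fun x ↦ norm_nonneg _) hUM
  have b2 : ∫ y, ‖V y‖ ^ 2 ∂μ ≤ A * ∫ x, ‖U x‖ ^ 2 ∂ν := by
    have h0 : 0 ≤ ∫ y, ‖V y‖ ^ 2 ∂μ := integral_nonneg fun y ↦ by positivity
    calc ∫ y, ‖V y‖ ^ 2 ∂μ = ‖((∫ y, ‖V y‖ ^ 2 ∂μ : ℝ) : ℂ)‖ := by
          rw [Complex.norm_real, Real.norm_of_nonneg h0]
      _ ≤ ∫ z : X × X, ‖U z.1‖ * ‖U z.2‖ * k z ∂ν.prod ν := by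
          rw [e2]
          refine norm_integral_le_of_norm_le sI ?_
          filter_upwards [hK] with z hz
          rw [norm_mul, norm_mul, RCLike.norm_conj]
          exact mul_le_mul_of_nonneg_left hz (by positivity)
      _ ≤ _ := sle
  have b1 : ∫ x, ‖U x‖ ^ 2 ∂ν ≤ ∫ y, (A / 2 * ‖G y‖ ^ 2 + 1 / (2 * A) * ‖V y‖ ^ 2) ∂μ := by
    have h0 : 0 ≤ ∫ x, ‖U x‖ ^ 2 ∂ν := integral_nonneg fun y ↦ by positivity
    rw [← Real.norm_of_nonneg h0, ← Complex.norm_real, e1]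
    refine norm_integral_le_of_norm_le ((hG2.const_mul _).add (hVi.const_mul _))
      (Filter.Eventually.of_forall fun y ↦ ?_)
    rw [norm_mul]
    have h1 : A / 2 * ‖G y‖ ^ 2 + 1 / (2 * A) * ‖V y‖ ^ 2 - ‖V y‖ * ‖G y‖ =
        1 / (2 * A) * (A * ‖G y‖ - ‖V y‖) ^ 2 := by
      field_simp; ring
    have h2 : 0 ≤ 1 / (2 * A) * (A * ‖G y‖ - ‖V y‖) ^ 2 := by positivity
    linarith
  rw [integral_add (hG2.const_mul _) (hVi.const_mul _), integral_const_mul,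
    integral_const_mul] at b1
  have b3 : 1 / (2 * A) * ∫ y, ‖V y‖ ^ 2 ∂μ ≤ 1 / (2 * A) * (A * ∫ x, ‖U x‖ ^ 2 ∂ν) := by gcongr
  have b4 : 1 / (2 * A) * (A * ∫ x, ‖U x‖ ^ 2 ∂ν) = 1 / 2 * ∫ x, ‖U x‖ ^ 2 ∂ν := by field_simp
  linarith

end TTstar

theorem intervalIntegrable_abs_rpow_neg_half (p q : ℝ) :
    IntervalIntegrable (fun u : ℝ ↦ |u| ^ (-(1 / 2) : ℝ)) volume p q := by
  have h1 : ∀ r : ℝ, 0 ≤ r →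
      IntervalIntegrable (fun u : ℝ ↦ |u| ^ (-(1 / 2) : ℝ)) volume 0 r := fun r hr ↦ by
    refine (intervalIntegral.intervalIntegrable_rpow' (r := -(1 / 2)) (by norm_num)).congr
      fun u hu ↦ ?_
    rw [Set.uIoc_of_le hr] at hu
    rw [abs_of_pos hu.1]
  have h2 : ∀ r : ℝ, IntervalIntegrable (fun u : ℝ ↦ |u| ^ (-(1 / 2) : ℝ)) volume 0 r := fun r ↦ by
    rcases le_total 0 r with hr | hr
    · exact h1 r hr
    · have := (h1 (-r) (by linarith)).comp_mul_left (c := -1)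
      simpa using this
  exact (h2 p).symm.trans (h2 q)

theorem setIntegral_abs_sub_rpow_le {x : ℝ} (hx : x ∈ Set.Ioo (-1 : ℝ) 1) :
    IntegrableOn (fun y : ℝ ↦ |x - y| ^ (-(1 / 2) : ℝ)) (Set.Ioo (-1) 1) ∧
    ∫ y in Set.Ioo (-1 : ℝ) 1, |x - y| ^ (-(1 / 2) : ℝ) ≤
      ∫ u in (-2 : ℝ)..2, |u| ^ (-(1 / 2) : ℝ) := by
  constructor
  · have := (intervalIntegrable_abs_rpow_neg_half (x - (-1)) (x - 1)).comp_sub_left x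
    simp only [sub_sub_cancel] at this
    rw [intervalIntegrable_iff_integrableOn_Ioo_of_le (by norm_num)] at this
    exact this
  · rw [← integral_Ioc_eq_integral_Ioo, ← intervalIntegral.integral_of_le (by norm_num),
      intervalIntegral.integral_comp_sub_left (fun u ↦ |u| ^ (-(1 / 2) : ℝ))]
    refine intervalIntegral.integral_mono_interval (by linarith [hx.1]) (by linarith)
      (by linarith [hx.2]) (Filter.Eventually.of_forall fun u ↦ by positivity)
      (intervalIntegrable_abs_rpow_neg_half _ _)

/-- The one-dimensional oscillatory integral. -/
def oscInt (b : ℝ) (G : ℝ → ℂ) (x t : ℝ) : ℂ := ∫ η in Set.Ioi 0, oscFactor b x t η * G η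

theorem exists_integral_truncated_le {b : ℝ} (hb : 2 < b) :
    ∃ A > 0, ∀ (τ : ℝ → ℝ) (N : ℝ) (G : ℝ → ℂ), Measurable τ → 0 ≤ N → Measurable G →
      IntegrableOn G (Set.Ioi 0) → IntegrableOn (fun η ↦ ‖G η‖ ^ 2) (Set.Ioi 0) →
      ∫ x in Set.Ioo (-1 : ℝ) 1, ‖∫ η in Set.Ioc 0 N, oscFactor b x (τ x) η * G η‖ ^ 2 ≤
        A * ∫ η in Set.Ioi 0, ‖G η‖ ^ 2 := by
  obtain ⟨C, hC, hK⟩ := exists_norm_integral_oscFactor_le hb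
  set P := ∫ u in (-2 : ℝ)..2, |u| ^ (-(1 / 2) : ℝ) with hP
  have hP0 : 0 ≤ P := intervalIntegral.integral_nonneg (by norm_num) fun u _ ↦ by positivity
  refine ⟨C * P + 1, by positivity, fun τ N G hτ hN hG hG1 hG2 ↦ ?_⟩
  have hsub : Set.Ioc 0 N ⊆ Set.Ioi 0 := Set.Ioc_subset_Ioi_self
  set ν := volume.restrict (Set.Ioo (-1 : ℝ) 1)
  have hkm : Measurable fun z : ℝ × ℝ ↦ C * |z.1 - z.2| ^ (-(1 / 2) : ℝ) := by fun_prop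
  have hkA : ∀ᵐ x ∂ν, ∫ x', C * |x - x'| ^ (-(1 / 2) : ℝ) ∂ν ≤ C * P := by
    filter_upwards [ae_restrict_mem measurableSet_Ioo] with x hx
    rw [integral_const_mul]
    exact mul_le_mul_of_nonneg_left (setIntegral_abs_sub_rpow_le hx).2 hC.le
  have hki : Integrable (fun z : ℝ × ℝ ↦ C * |z.1 - z.2| ^ (-(1 / 2) : ℝ)) (ν.prod ν) := by
    rw [integrable_prod_iff hkm.aestronglyMeasurable]
    constructor
    · filter_upwards [ae_restrict_mem measurableSet_Ioo] with x hx
      exact (setIntegral_abs_sub_rpow_le hx).1.const_mul C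
    · refine Integrable.of_bound (C := C * P) ?_ ?_
      · exact (hkm.stronglyMeasurable.norm.integral_prod_right').aestronglyMeasurable
      · filter_upwards [hkA] with x hx
        rw [Real.norm_of_nonneg (integral_nonneg fun y ↦ norm_nonneg _)]
        refine le_trans (le_of_eq ?_) hx
        refine integral_congr_ae (Filter.Eventually.of_forall fun y ↦ ?_)
        exact Real.norm_of_nonneg (by positivity)
  have hm : Measurable fun z : ℝ × ℝ ↦ oscFactor b z.1 (τ z.1) z.2 :=
    (continuous_oscFactor (b := b) (by linarith)).measurable.comp
      (measurable_fst.prodMk ((hτ.comp measurable_fst).prodMk measurable_snd))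
  have hdiag : ∀ᵐ z ∂ν.prod ν, z.1 ≠ z.2 := by
    rw [Measure.ae_prod_iff_ae_ae]
    · refine Filter.Eventually.of_forall fun x ↦ ?_
      have : ∀ᵐ y ∂(volume : Measure ℝ), y ≠ x := by simp [ae_iff]
      filter_upwards [ae_restrict_of_ae this] with y hy using hy.symm
    · exact (measurableSet_eq_fun measurable_fst measurable_snd).compl
  refine (integral_norm_sq_le_of_kernel (ν := ν) (μ := volume.restrict (Set.Ioc 0 N)) hm
    (fun z ↦ (norm_oscFactor _ _ _ _).le) (A := C * P + 1) (by positivity)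
    (k := fun z ↦ C * |z.1 - z.2| ^ (-(1 / 2) : ℝ)) (fun z ↦ by positivity)
    (fun z ↦ by simp [abs_sub_comm]) hki ?_ ?_ hG (hG1.mono_set hsub) (hG2.mono_set hsub)).trans ?_
  · filter_upwards [hkA] with x hx
    exact hx.trans (by linarith)
  · filter_upwards [hdiag] with z hz
    simp only [conj_oscFactor, oscFactor_mul]
    rw [← intervalIntegral.integral_of_le hN]
    exact hK _ _ N (by rw [← sub_eq_add_neg]; exact sub_ne_zero.2 hz) hN
  · exact mul_le_mul_of_nonneg_left (setIntegral_mono_set hG2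
      (Filter.Eventually.of_forall fun η ↦ by positivity) hsub.eventuallyLE) (by positivity)

theorem measurable_oscInt {b : ℝ} (hb : 0 ≤ b) {G : ℝ → ℂ} (hG : Measurable G) {τ : ℝ → ℝ}
    (hτ : Measurable τ) (S : Set ℝ) :
    Measurable fun x ↦ ∫ η in S, oscFactor b x (τ x) η * G η := by
  have hm : Measurable fun z : ℝ × ℝ ↦ oscFactor b z.1 (τ z.1) z.2 :=
    (continuous_oscFactor (b := b) hb).measurable.comp
      (measurable_fst.prodMk ((hτ.comp measurable_fst).prodMk measurable_snd))
  refine StronglyMeasurable.measurable ?_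
  refine StronglyMeasurable.integral_prod_right
    (f := fun x η ↦ oscFactor b x (τ x) η * G η) ?_
  exact (hm.mul (hG.comp measurable_snd)).stronglyMeasurable

theorem integrableOn_oscFactor_mul {b : ℝ} (hb : 0 ≤ b) {G : ℝ → ℂ} {S : Set ℝ}
    (hG1 : IntegrableOn G S) (x t : ℝ) : IntegrableOn (fun η ↦ oscFactor b x t η * G η) S := by
  have hcont : Continuous (oscFactor b x t) := (continuous_oscFactor (b := b) hb).comp
    (by fun_prop : Continuous fun η : ℝ ↦ ((x, t, η) : ℝ × ℝ × ℝ))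
  exact Integrable.bdd_mul hG1 (c := 1) hcont.aestronglyMeasurable
    (Filter.Eventually.of_forall fun η ↦ (norm_oscFactor _ _ _ _).le)

theorem exists_lintegral_oscInt_le {b : ℝ} (hb : 2 < b) :
    ∃ A > 0, ∀ (τ : ℝ → ℝ) (G : ℝ → ℂ), Measurable τ → Measurable G →
      IntegrableOn G (Set.Ioi 0) → IntegrableOn (fun η ↦ ‖G η‖ ^ 2) (Set.Ioi 0) →
      ∫⁻ x in Set.Ioo (-1 : ℝ) 1, ‖oscInt b G x (τ x)‖ₑ ^ 2 ≤
        ENNReal.ofReal (A * ∫ η in Set.Ioi 0, ‖G η‖ ^ 2) := by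
  obtain ⟨A, hA, H⟩ := exists_integral_truncated_le hb
  refine ⟨A, hA, fun τ G hτ hG hG1 hG2 ↦ ?_⟩
  set U : ℕ → ℝ → ℂ := fun n x ↦ ∫ η in Set.Ioc 0 (n : ℝ), oscFactor b x (τ x) η * G η with hU
  have hUm : ∀ n, Measurable (U n) := fun n ↦ measurable_oscInt (by linarith) hG hτ _
  have hUb : ∀ n x, ‖U n x‖ ≤ ∫ η in Set.Ioi 0, ‖G η‖ := fun n x ↦ by
    refine (norm_integral_le_integral_norm _).trans ?_
    simp_rw [norm_mul, norm_oscFactor, one_mul]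
    exact setIntegral_mono_set hG1.norm (Filter.Eventually.of_forall fun η ↦ norm_nonneg _)
      Set.Ioc_subset_Ioi_self.eventuallyLE
  have hlim : ∀ x, Filter.Tendsto (fun n ↦ ‖U n x‖ₑ ^ 2) Filter.atTop
      (nhds (‖oscInt b G x (τ x)‖ₑ ^ 2)) := fun x ↦ by
    have h1 := intervalIntegral_tendsto_integral_Ioi (μ := volume) 0
      (integrableOn_oscFactor_mul (b := b) (by linarith) hG1 x (τ x)) tendsto_natCast_atTop_atTop
    have h2 : (fun n : ℕ ↦ ∫ η in (0 : ℝ)..(n : ℝ), oscFactor b x (τ x) η * G η) =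
        fun n ↦ U n x := by
      ext n
      rw [intervalIntegral.integral_of_le (Nat.cast_nonneg n)]
    rw [h2] at h1
    exact ((ENNReal.continuous_pow 2).tendsto _).comp ((continuous_enorm.tendsto _).comp h1)
  calc ∫⁻ x in Set.Ioo (-1 : ℝ) 1, ‖oscInt b G x (τ x)‖ₑ ^ 2
      = ∫⁻ x in Set.Ioo (-1 : ℝ) 1, Filter.liminf (fun n ↦ ‖U n x‖ₑ ^ 2) Filter.atTop :=
        lintegral_congr fun x ↦ (hlim x).liminf_eq.symm
    _ ≤ Filter.liminf (fun n ↦ ∫⁻ x in Set.Ioo (-1 : ℝ) 1, ‖U n x‖ₑ ^ 2) Filter.atTop :=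
        lintegral_liminf_le fun n ↦ (hUm n).enorm.pow_const 2
    _ ≤ _ := by
        refine Filter.liminf_le_of_frequently_le' (Filter.Frequently.of_forall fun n ↦ ?_)
        have h1 := H τ n G hτ (Nat.cast_nonneg n) hG hG1 hG2
        have h2 : Integrable (fun x ↦ ‖U n x‖ ^ 2) (volume.restrict (Set.Ioo (-1 : ℝ) 1)) := by
          refine Integrable.of_bound (C := (∫ η in Set.Ioi 0, ‖G η‖) ^ 2)
            (((hUm n).norm.pow_const 2).aestronglyMeasurable)
            (Filter.Eventually.of_forall fun x ↦ ?_)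
          rw [norm_pow, norm_norm]
          exact pow_le_pow_left₀ (norm_nonneg _) (hUb n x) 2
        have h3 := ofReal_integral_eq_lintegral_ofReal h2
          (Filter.Eventually.of_forall fun x ↦ by positivity)
        refine le_trans (le_of_eq ?_) (ENNReal.ofReal_le_ofReal h1)
        rw [h3]
        refine lintegral_congr fun x ↦ ?_
        rw [ENNReal.ofReal_pow (norm_nonneg _), ofReal_norm]

theorem exists_measurable_selector {b : ℝ} (hb : 0 ≤ b) {G : ℝ → ℂ} (hG : Measurable G)
    (t : ℕ → ℝ) (m : ℕ) : ∃ τ : ℝ → ℝ, Measurable τ ∧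
      ∀ x, ∀ k ≤ m, ‖oscInt b G x (t k)‖ₑ ≤ ‖oscInt b G x (τ x)‖ₑ := by
  induction m with
  | zero =>
    refine ⟨fun _ ↦ t 0, measurable_const, fun x k hk ↦ ?_⟩
    rw [Nat.le_zero.1 hk]
  | succ m ih =>
    obtain ⟨τ, hτ, H⟩ := ih
    have hS : MeasurableSet {x | ‖oscInt b G x (τ x)‖ₑ ≤ ‖oscInt b G x (t (m + 1))‖ₑ} :=
      measurableSet_le (measurable_oscInt hb hG hτ _).enorm
        (measurable_oscInt hb hG measurable_const _).enorm
    classical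
    refine ⟨fun x ↦ if ‖oscInt b G x (τ x)‖ₑ ≤ ‖oscInt b G x (t (m + 1))‖ₑ then t (m + 1) else τ x,
      Measurable.ite hS measurable_const hτ, fun x k hk ↦ ?_⟩
    simp only
    split_ifs with h
    · rcases Nat.le_succ_iff.1 hk with h1 | h1
      · exact (H x k h1).trans h
      · rw [h1]
    · rcases Nat.le_succ_iff.1 hk with h1 | h1
      · exact H x k h1
      · rw [h1]; exact (not_le.1 h).le

/-- The maximal estimate for the one-dimensional oscillatory integral. -/
theorem exists_lintegral_iSup_oscInt_le {b : ℝ} (hb : 2 < b) :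
    ∃ A > 0, ∀ (t : ℕ → ℝ) (G : ℝ → ℂ), Measurable G →
      IntegrableOn G (Set.Ioi 0) → IntegrableOn (fun η ↦ ‖G η‖ ^ 2) (Set.Ioi 0) →
      ∫⁻ x in Set.Ioo (-1 : ℝ) 1, ⨆ k, ‖oscInt b G x (t k)‖ₑ ^ 2 ≤
        ENNReal.ofReal (A * ∫ η in Set.Ioi 0, ‖G η‖ ^ 2) := by
  obtain ⟨A, hA, H⟩ := exists_lintegral_oscInt_le hb
  refine ⟨A, hA, fun t G hG hG1 hG2 ↦ ?_⟩
  choose τ hτ hsel using exists_measurable_selector (b := b) (by linarith) hG t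
  calc ∫⁻ x in Set.Ioo (-1 : ℝ) 1, ⨆ k, ‖oscInt b G x (t k)‖ₑ ^ 2
      ≤ ∫⁻ x in Set.Ioo (-1 : ℝ) 1,
          Filter.liminf (fun m ↦ ‖oscInt b G x (τ m x)‖ₑ ^ 2) Filter.atTop := by
        refine lintegral_mono fun x ↦ iSup_le fun k ↦ ?_
        refine Filter.le_liminf_of_le (by isBoundedDefault) ?_
        filter_upwards [Filter.eventually_ge_atTop k] with m hm
        gcongr
        exact hsel m x k hm
    _ ≤ Filter.liminf (fun m ↦ ∫⁻ x in Set.Ioo (-1 : ℝ) 1, ‖oscInt b G x (τ m x)‖ₑ ^ 2)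
          Filter.atTop := lintegral_liminf_le fun m ↦
            (measurable_oscInt (by linarith) hG (hτ m) _).enorm.pow_const 2
    _ ≤ _ := Filter.liminf_le_of_frequently_le'
        (Filter.Frequently.of_forall fun m ↦ H (τ m) G (hτ m) hG hG1 hG2)

theorem exists_norm_sub_le_div {f f' : ℝ → ℂ} {K : ℝ} (hK : 0 ≤ K)
    (hf : ∀ s, 1 ≤ s → HasDerivAt f (f' s) s) (hb : ∀ s, 1 ≤ s → ‖f' s‖ ≤ K / s ^ 2) :
    ∃ L : ℂ, ∀ s, 1 ≤ s → ‖f s - L‖ ≤ K / s := by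
  have step : ∀ s x : ℝ, 1 ≤ s → s ≤ x → ‖f x - f s‖ ≤ K / s := fun s x hs hsx ↦ by
    have h1 : ‖f x - f s‖ ≤ K / s - K / x := by
      refine image_norm_le_of_norm_deriv_right_le_deriv_boundary' (a := s) (b := x)
        (f := fun y ↦ f y - f s) (f' := f') (B := fun y ↦ K / s - K / y) (B' := fun y ↦ K / y ^ 2)
        ?_ ?_ (by simp) ?_ ?_ ?_ (Set.right_mem_Icc.2 hsx)
      · exact fun y hy ↦ ((hf y (hs.trans hy.1)).sub_const _).continuousAt.continuousWithinAt
      · exact fun y hy ↦ ((hf y (hs.trans hy.1)).sub_const _).hasDerivWithinAt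
      · refine ContinuousOn.sub continuousOn_const (continuousOn_const.div continuousOn_id ?_)
        intro y hy
        have : s ≤ y := hy.1
        exact (by linarith : (0 : ℝ) < y).ne'
      · intro y hy
        have hy0 : y ≠ 0 := by have := hy.1; linarith
        have := ((hasDerivAt_inv hy0).const_mul K).const_sub (K / s)
        refine HasDerivAt.hasDerivWithinAt (this.congr_deriv ?_)
        ring
      · exact fun y hy ↦ hb y (hs.trans hy.1)
    have : 0 ≤ K / x := div_nonneg hK (by linarith)
    linarith
  have hcau : CauchySeq f := by
    rw [Metric.cauchySeq_iff']
    intro ε hε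
    refine ⟨max 1 ((K + 1) / ε), fun x hx ↦ ?_⟩
    have h1 : (1 : ℝ) ≤ max 1 ((K + 1) / ε) := le_max_left _ _
    rw [dist_eq_norm]
    refine (step _ x h1 hx).trans_lt ?_
    rw [div_lt_iff₀ (by linarith)]
    have : (K + 1) / ε ≤ max 1 ((K + 1) / ε) := le_max_right _ _
    rw [div_le_iff₀ hε] at this
    linarith
  obtain ⟨L, hL⟩ := cauchySeq_tendsto_of_complete hcau
  refine ⟨L, fun s hs ↦ ?_⟩
  have h2 : Filter.Tendsto (fun x ↦ ‖f s - f x‖) Filter.atTop (nhds ‖f s - L‖) :=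
    (tendsto_const_nhds.sub hL).norm
  refine le_of_tendsto h2 ?_
  filter_upwards [Filter.eventually_ge_atTop s] with x hx
  rw [norm_sub_rev]
  exact step s x hs hx

theorem exists_bound_of_perturbed_oscillator {φ φ₁ : ℝ → ℂ} {c : ℝ}
    (h0 : ∀ s, 0 < s → HasDerivAt φ (φ₁ s) s)
    (h1 : ∀ s, 0 < s → HasDerivAt φ₁ (((c / s ^ 2 - 1 : ℝ) : ℂ) * φ s) s) :
    ∃ M ≥ 0, ∀ s, 1 ≤ s → ‖φ s‖ ≤ M := by
  set W : ℝ → ℝ := fun s ↦ (‖φ s‖ ^ 2 + ‖φ₁ s‖ ^ 2) * Real.exp (|c| * s⁻¹) with hW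
  have hd : ∀ s, 0 < s → ∃ w ≤ 0, HasDerivAt W w s := fun s hs ↦ by
    have d1 := (h0 s hs).norm_sq.add (h1 s hs).norm_sq
    have d2 := ((hasDerivAt_inv hs.ne').const_mul |c|).exp
    refine ⟨_, ?_, d1.mul d2⟩
    have e1 : ⟪φ₁ s, ((c / s ^ 2 - 1 : ℝ) : ℂ) * φ s⟫_ℝ = (c / s ^ 2 - 1) * ⟪φ s, φ₁ s⟫_ℝ := by
      rw [← Complex.real_smul, inner_smul_right, real_inner_comm]
    have e2 : |⟪φ s, φ₁ s⟫_ℝ| ≤ ‖φ s‖ * ‖φ₁ s‖ := abs_real_inner_le_norm _ _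
    simp only [Pi.add_apply]
    rw [e1]
    have e3 : c * ⟪φ s, φ₁ s⟫_ℝ ≤ |c| * (‖φ s‖ * ‖φ₁ s‖) := by
      refine (le_abs_self _).trans ?_
      rw [abs_mul]
      gcongr
    have e4 : 2 * (c * ⟪φ s, φ₁ s⟫_ℝ) ≤ |c| * (‖φ s‖ ^ 2 + ‖φ₁ s‖ ^ 2) := by
      have := mul_nonneg (abs_nonneg c) (sq_nonneg (‖φ s‖ - ‖φ₁ s‖))
      nlinarith
    have e5 : 0 ≤ Real.exp (|c| * s⁻¹) * (s ^ 2)⁻¹ := by positivity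
    have := mul_le_mul_of_nonneg_left e4 e5
    have e6 : (c / s ^ 2 - 1) * ⟪φ s, φ₁ s⟫_ℝ =
      (s ^ 2)⁻¹ * (c * ⟪φ s, φ₁ s⟫_ℝ) - ⟪φ s, φ₁ s⟫_ℝ := by ring
    rw [e6]
    generalize ⟪φ s, φ₁ s⟫_ℝ = p at *
    generalize Real.exp (|c| * s⁻¹) = E at *
    linear_combination this
  have hanti : AntitoneOn W (Set.Ici 1) := by
    have hpos : ∀ s ∈ Set.Ici (1 : ℝ), 0 < s := fun s hs ↦ lt_of_lt_of_le one_pos hs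
    refine antitoneOn_of_deriv_nonpos (convex_Ici 1) ?_ ?_ ?_
    · intro s hs
      obtain ⟨w, -, hw⟩ := hd s (hpos s hs)
      exact hw.continuousAt.continuousWithinAt
    · intro s hs
      obtain ⟨w, -, hw⟩ := hd s (hpos s (interior_subset hs))
      exact hw.differentiableAt.differentiableWithinAt
    · intro s hs
      obtain ⟨w, hw0, hw⟩ := hd s (hpos s (interior_subset hs))
      rw [hw.deriv]; exact hw0
  refine ⟨√(W 1), Real.sqrt_nonneg _, fun s hs ↦ Real.le_sqrt_of_sq_le ?_⟩
  refine le_trans ?_ (hanti (Set.mem_Ici.2 le_rfl) (Set.mem_Ici.2 hs) hs)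
  have : 1 ≤ Real.exp (|c| * s⁻¹) := Real.one_le_exp (by positivity)
  have h3 : 0 ≤ ‖φ₁ s‖ ^ 2 := by positivity
  have h4 : 0 ≤ ‖φ s‖ ^ 2 := by positivity
  simp only [hW]
  nlinarith

/-- Solutions of a perturbed oscillator are asymptotic to solutions of the free one. -/
theorem exists_asymptotics_of_perturbed_oscillator {φ φ₁ : ℝ → ℂ} {c : ℝ}
    (h0 : ∀ s, 0 < s → HasDerivAt φ (φ₁ s) s)
    (h1 : ∀ s, 0 < s → HasDerivAt φ₁ (((c / s ^ 2 - 1 : ℝ) : ℂ) * φ s) s) :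
    ∃ (α β : ℂ) (K : ℝ), 0 ≤ K ∧ ∀ s : ℝ, 1 ≤ s →
      ‖φ s - (α * Complex.exp (Complex.I * s) + β * Complex.exp (-(Complex.I * s)))‖ ≤ K / s := by
  obtain ⟨M, hM, hφM⟩ := exists_bound_of_perturbed_oscillator h0 h1
  have hn : ∀ s : ℝ, ‖Complex.exp (Complex.I * s)‖ = 1 := fun s ↦ by
    rw [mul_comm]; exact Complex.norm_exp_ofReal_mul_I s
  have hn' : ∀ s : ℝ, ‖Complex.exp (-(Complex.I * s))‖ = 1 := fun s ↦ by
    rw [Complex.exp_neg, norm_inv, hn, inv_one]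
  have de : ∀ s : ℝ, HasDerivAt (fun s : ℝ ↦ Complex.exp (Complex.I * s))
      (Complex.exp (Complex.I * s) * Complex.I) s := fun s ↦ by
    have := ((hasDerivAt_id s).ofReal_comp.const_mul Complex.I).cexp
    simpa using this
  have de' : ∀ s : ℝ, HasDerivAt (fun s : ℝ ↦ Complex.exp (-(Complex.I * s)))
      (Complex.exp (-(Complex.I * s)) * -Complex.I) s := fun s ↦ by
    have := ((hasDerivAt_id s).ofReal_comp.const_mul Complex.I).neg.cexp
    simpa using this
  have hc : ∀ s : ℝ, 1 ≤ s → ‖((c / s ^ 2 : ℝ) : ℂ) * φ s‖ ≤ |c| * M / s ^ 2 := fun s hs ↦ by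
    rw [norm_mul, Complex.norm_real, Real.norm_eq_abs, abs_div, abs_of_nonneg (sq_nonneg s),
      div_mul_eq_mul_div]
    have := hφM s hs
    gcongr
  obtain ⟨A, hA⟩ := exists_norm_sub_le_div (K := |c| * M) (by positivity)
    (f := fun s ↦ (φ₁ s + Complex.I * φ s) * Complex.exp (-(Complex.I * s)))
    (f' := fun s ↦ ((c / s ^ 2 : ℝ) : ℂ) * φ s * Complex.exp (-(Complex.I * s)))
    (fun s hs ↦ by
      have hs0 : 0 < s := by linarith
      refine (((h1 s hs0).add ((h0 s hs0).const_mul Complex.I)).mul (de' s)).congr_deriv ?_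
      simp only [Pi.add_apply]
      push_cast
      linear_combination (-(φ s * Complex.exp (-(Complex.I * s)))) * Complex.I_sq)
    (fun s hs ↦ by rw [norm_mul, hn', mul_one]; exact hc s hs)
  obtain ⟨B, hB⟩ := exists_norm_sub_le_div (K := |c| * M) (by positivity)
    (f := fun s ↦ (φ₁ s - Complex.I * φ s) * Complex.exp (Complex.I * s))
    (f' := fun s ↦ ((c / s ^ 2 : ℝ) : ℂ) * φ s * Complex.exp (Complex.I * s))
    (fun s hs ↦ by
      have hs0 : 0 < s := by linarith
      refine (((h1 s hs0).sub ((h0 s hs0).const_mul Complex.I)).mul (de s)).congr_deriv ?_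
      simp only [Pi.sub_apply]
      push_cast
      linear_combination (-(φ s * Complex.exp (Complex.I * s))) * Complex.I_sq)
    (fun s hs ↦ by rw [norm_mul, hn, mul_one]; exact hc s hs)
  refine ⟨-Complex.I / 2 * A, Complex.I / 2 * B, |c| * M, by positivity, fun s hs ↦ ?_⟩
  have he : Complex.exp (Complex.I * s) * Complex.exp (-(Complex.I * s)) = 1 := by
    rw [← Complex.exp_add, add_neg_cancel, Complex.exp_zero]
  have e1 : φ s - (-Complex.I / 2 * A * Complex.exp (Complex.I * s) +
      Complex.I / 2 * B * Complex.exp (-(Complex.I * s))) =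
      -Complex.I / 2 * (((φ₁ s + Complex.I * φ s) * Complex.exp (-(Complex.I * s)) - A) *
        Complex.exp (Complex.I * s)) +
      Complex.I / 2 * (((φ₁ s - Complex.I * φ s) * Complex.exp (Complex.I * s) - B) *
        Complex.exp (-(Complex.I * s))) := by
    linear_combination (Complex.I ^ 2 * φ s) * he + φ s * Complex.I_sq
  rw [e1]
  have hI : ‖(-Complex.I / 2 : ℂ)‖ = 1 / 2 := by simp
  have hI' : ‖(Complex.I / 2 : ℂ)‖ = 1 / 2 := by simp
  refine (norm_add_le _ _).trans ?_
  rw [norm_mul, norm_mul, norm_mul, norm_mul, hn, hn', hI, hI']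
  linarith [hA s hs, hB s hs]

theorem exists_asymptotics_of_bessel {j j₁ j₂ : ℝ → ℂ} {m V : ℝ} (hm : 0 < m)
    (h0 : ∀ s, 0 < s → HasDerivAt j (j₁ s) s) (h1 : ∀ s, 0 < s → HasDerivAt j₁ (j₂ s) s)
    (hode : ∀ s : ℝ, 0 < s → (s : ℂ) ^ 2 * (j s + j₂ s) + 2 * m * s * j₁ s = 0)
    (hV : ∀ s, ‖j s‖ ≤ V) :
    ∃ (α β : ℂ) (C : ℝ), 0 < C ∧ ∀ s : ℝ, 0 < s →
      ‖((s ^ m : ℝ) : ℂ) * j s -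
        (α * Complex.exp (Complex.I * s) + β * Complex.exp (-(Complex.I * s)))‖ ≤ C / (1 + s) := by
  have dp : ∀ (r s : ℝ), 0 < s → HasDerivAt (fun s : ℝ ↦ ((s ^ r : ℝ) : ℂ))
      ((r * s ^ (r - 1) : ℝ) : ℂ) s := fun r s hs ↦
    (Real.hasDerivAt_rpow_const (p := r) (Or.inl hs.ne')).ofReal_comp
  obtain ⟨α, β, K, hK, H⟩ := exists_asymptotics_of_perturbed_oscillator (c := m * (m - 1))
    (φ := fun s ↦ ((s ^ m : ℝ) : ℂ) * j s)
    (φ₁ := fun s ↦ ((m * s ^ (m - 1) : ℝ) : ℂ) * j s + ((s ^ m : ℝ) : ℂ) * j₁ s)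
    (fun s hs ↦ (dp m s hs).mul (h0 s hs))
    (fun s hs ↦ by
      have d1 : HasDerivAt (fun s : ℝ ↦ ((m * s ^ (m - 1) : ℝ) : ℂ))
          ((m * ((m - 1) * s ^ (m - 1 - 1)) : ℝ) : ℂ) s :=
        ((Real.hasDerivAt_rpow_const (p := m - 1) (Or.inl hs.ne')).const_mul m).ofReal_comp
      refine ((d1.mul (h0 s hs)).add ((dp m s hs).mul (h1 s hs))).congr_deriv ?_
      have hsc : (s : ℂ) ≠ 0 := by exact_mod_cast hs.ne'
      have e := hode s hs
      rw [Real.rpow_sub_one hs.ne', Real.rpow_sub_one hs.ne']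
      push_cast
      field_simp
      linear_combination ((s ^ m : ℝ) : ℂ) * e)
  have hV0 : 0 ≤ V := (norm_nonneg _).trans (hV 0)
  refine ⟨α, β, 2 * K + 2 * (V + ‖α‖ + ‖β‖) + 1, by positivity, fun s hs ↦ ?_⟩
  rcases le_total 1 s with h | h
  · refine (H s h).trans ?_
    rw [div_le_div_iff₀ hs (by linarith)]
    have : 0 ≤ (V + ‖α‖ + ‖β‖) * s := by positivity
    nlinarith
  · have hn : ‖Complex.exp (Complex.I * s)‖ = 1 := by
      rw [mul_comm]; exact Complex.norm_exp_ofReal_mul_I s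
    have hn' : ‖Complex.exp (-(Complex.I * s))‖ = 1 := by
      rw [Complex.exp_neg, norm_inv, hn, inv_one]
    have b1 : ‖((s ^ m : ℝ) : ℂ) * j s‖ ≤ V := by
      rw [norm_mul, Complex.norm_real, Real.norm_of_nonneg (Real.rpow_nonneg hs.le m)]
      have := Real.rpow_le_one hs.le h hm.le
      have h3 := Real.rpow_nonneg hs.le m
      nlinarith [hV s, norm_nonneg (j s)]
    have b2 : ‖((s ^ m : ℝ) : ℂ) * j s -
        (α * Complex.exp (Complex.I * s) + β * Complex.exp (-(Complex.I * s)))‖ ≤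
        V + (‖α‖ + ‖β‖) := by
      refine (norm_sub_le _ _).trans (add_le_add b1 ((norm_add_le _ _).trans ?_))
      rw [norm_mul, norm_mul, hn, hn', mul_one, mul_one]
    refine b2.trans ?_
    rw [le_div_iff₀ (by linarith)]
    have : 0 ≤ V + ‖α‖ + ‖β‖ := by positivity
    nlinarith

theorem hasDerivAt_integral_of_bounded {X : Type*} [MeasurableSpace X] {μ : Measure X}
    [IsFiniteMeasure μ] {F F' : ℝ → X → ℂ} {B B' : ℝ}
    (hF : ∀ s, AEStronglyMeasurable (F s) μ) (hF' : ∀ s, AEStronglyMeasurable (F' s) μ)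
    (hB : ∀ s y, ‖F s y‖ ≤ B) (hB' : ∀ s y, ‖F' s y‖ ≤ B')
    (hd : ∀ s y, HasDerivAt (fun s ↦ F s y) (F' s y) s) (s : ℝ) :
    HasDerivAt (fun s ↦ ∫ y, F s y ∂μ) (∫ y, F' s y ∂μ) s :=
  (hasDerivAt_integral_of_dominated_loc_of_deriv_le (bound := fun _ ↦ B') Filter.univ_mem
    (Filter.Eventually.of_forall hF)
    ((integrable_const B).mono' (hF s) (Filter.Eventually.of_forall (hB s))) (hF' s)
    (Filter.Eventually.of_forall fun y s _ ↦ hB' s y) (integrable_const B')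
    (Filter.Eventually.of_forall fun y s _ ↦ hd s y)).2

section SphAvg

variable {E : Type*} [NormedAddCommGroup E] [InnerProductSpace ℝ E]

/-- The radial projection onto the unit sphere. -/
def dir (y : E) : E := ‖y‖⁻¹ • y

theorem norm_dir_le (y : E) : ‖dir y‖ ≤ 1 := by
  rw [dir, norm_smul, norm_inv, norm_norm]
  exact inv_mul_le_one

theorem norm_dir {y : E} (hy : y ≠ 0) : ‖dir y‖ = 1 := by
  rw [dir, norm_smul, norm_inv, norm_norm, inv_mul_cancel₀ (norm_ne_zero_iff.2 hy)]

variable [FiniteDimensional ℝ E] [MeasurableSpace E] [BorelSpace E]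

theorem measurable_dir : Measurable (dir : E → E) :=
  measurable_norm.inv.smul measurable_id

/-- The average (up to normalization) of the plane wave with frequency `v` over the sphere. -/
def sphAvg (v : E) : ℂ :=
  ∫ y in Metric.ball (0 : E) 1, Complex.exp (Complex.I * ((⟪dir y, v⟫_ℝ : ℝ) : ℂ))

theorem sphAvg_eq_of_norm_eq {v w : E} (h : ‖v‖ = ‖w‖) : sphAvg v = sphAvg w := by
  set L : E ≃ₗᵢ[ℝ] E := (ℝ ∙ (v - w))ᗮ.reflection
  have hL : L v = w := Submodule.reflection_sub h
  have hm := L.measurePreserving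
  have hdir : ∀ y, dir (L y) = L (dir y) := fun y ↦ by
    simp [dir]
  have h1 := hm.setIntegral_preimage_emb L.toHomeomorph.measurableEmbedding
    (fun y ↦ Complex.exp (Complex.I * ((⟪dir y, w⟫_ℝ : ℝ) : ℂ))) (Metric.ball 0 1)
  have h2 : L ⁻¹' Metric.ball (0 : E) 1 = Metric.ball 0 1 := by
    ext y; simp
  rw [sphAvg, sphAvg, ← h1, h2]
  refine integral_congr_ae (Filter.Eventually.of_forall fun y ↦ ?_)
  simp only [hdir, ← hL, L.inner_map_map]

theorem norm_exp_I_mul (x : ℝ) : ‖Complex.exp (Complex.I * x)‖ = 1 := by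
  rw [mul_comm]; exact Complex.norm_exp_ofReal_mul_I x

theorem hasDerivAt_exp_I_mul {θ : ℝ → ℝ} {θ' s : ℝ} (h : HasDerivAt θ θ' s) :
    HasDerivAt (fun s ↦ Complex.exp (Complex.I * (θ s : ℂ)))
      (Complex.I * θ' * Complex.exp (Complex.I * (θ s : ℂ))) s := by
  refine (h.ofReal_comp.const_mul Complex.I).cexp.congr_deriv ?_
  ring

theorem integral_second_moment {v w : E} (hv : ‖v‖ = 1) (hw : ‖w‖ = 1) (hvw : ⟪v, w⟫_ℝ = 0)
    (s : ℝ) :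
    ∫ y in Metric.ball (0 : E) 1, (-(Complex.I * (s * ⟪dir y, v⟫_ℝ : ℝ)) -
      ((s * ⟪dir y, w⟫_ℝ : ℝ) : ℂ) ^ 2) *
        Complex.exp (Complex.I * ((s * ⟪dir y, v⟫_ℝ : ℝ) : ℂ)) = 0 := by
  set θ : ℝ → E → ℝ := fun φ y ↦ s * cos φ * ⟪dir y, v⟫_ℝ + s * sin φ * ⟪dir y, w⟫_ℝ with hθ
  set θ₁ : ℝ → E → ℝ := fun φ y ↦ -(s * sin φ) * ⟪dir y, v⟫_ℝ + s * cos φ * ⟪dir y, w⟫_ℝ with hθ₁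
  have mi : ∀ u : E, Measurable fun y : E ↦ ⟪dir y, u⟫_ℝ := fun u ↦
    measurable_dir.inner measurable_const
  have bi : ∀ u : E, ‖u‖ = 1 → ∀ y : E, |⟪dir y, u⟫_ℝ| ≤ 1 := fun u hu y ↦
    (abs_real_inner_le_norm _ _).trans (by rw [hu, mul_one]; exact norm_dir_le y)
  have mθ : ∀ φ, Measurable (θ φ) := fun φ ↦
    ((mi v).const_mul _).add ((mi w).const_mul _)
  have mθ₁ : ∀ φ, Measurable (θ₁ φ) := fun φ ↦
    ((mi v).const_mul _).add ((mi w).const_mul _)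
  have dθ : ∀ φ y, HasDerivAt (fun φ ↦ θ φ y) (θ₁ φ y) φ := fun φ y ↦ by
    refine ((((hasDerivAt_cos φ).const_mul s).mul_const ⟪dir y, v⟫_ℝ).add
      (((hasDerivAt_sin φ).const_mul s).mul_const ⟪dir y, w⟫_ℝ)).congr_deriv ?_
    simp only [hθ₁]; ring
  have dθ₁ : ∀ φ y, HasDerivAt (fun φ ↦ θ₁ φ y) (-θ φ y) φ := fun φ y ↦ by
    refine ((((hasDerivAt_sin φ).const_mul s).neg.mul_const ⟪dir y, v⟫_ℝ).add
      (((hasDerivAt_cos φ).const_mul s).mul_const ⟪dir y, w⟫_ℝ)).congr_deriv ?_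
    simp only [hθ]; ring
  have bb : ∀ c d x y : ℝ, |c| ≤ 1 → |d| ≤ 1 → |x| ≤ 1 → |y| ≤ 1 →
      |s * c * x + s * d * y| ≤ 2 * |s| := fun c d x y hc hd hx hy ↦ by
    have e1 : |c * x| ≤ 1 := by rw [abs_mul]; exact mul_le_one₀ hc (abs_nonneg _) hx
    have e2 : |d * y| ≤ 1 := by rw [abs_mul]; exact mul_le_one₀ hd (abs_nonneg _) hy
    have e3 : |c * x + d * y| ≤ 2 := (abs_add_le _ _).trans (by linarith)
    rw [show s * c * x + s * d * y = (c * x + d * y) * s by ring, abs_mul]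
    exact mul_le_mul_of_nonneg_right e3 (abs_nonneg s)
  have bθ : ∀ φ y, |θ φ y| ≤ 2 * |s| := fun φ y ↦
    bb _ _ _ _ (abs_cos_le_one φ) (abs_sin_le_one φ) (bi v hv y) (bi w hw y)
  have bθ₁ : ∀ φ y, |θ₁ φ y| ≤ 2 * |s| := fun φ y ↦ by
    have := bb (-sin φ) _ _ _ (by rw [abs_neg]; exact abs_sin_le_one φ) (abs_cos_le_one φ)
      (bi v hv y) (bi w hw y)
    simpa only [hθ₁, mul_neg, neg_mul] using this
  have me : ∀ φ, Measurable fun y ↦ Complex.exp (Complex.I * (θ φ y : ℂ)) := fun φ ↦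
    ((Complex.measurable_ofReal.comp (mθ φ)).const_mul _).cexp
  have me₁ : ∀ φ, Measurable fun y ↦ Complex.I * (θ₁ φ y : ℂ) := fun φ ↦
    (Complex.measurable_ofReal.comp (mθ₁ φ)).const_mul _
  have me₂ : ∀ φ, Measurable fun y ↦ -(Complex.I * (θ φ y : ℂ)) - (θ₁ φ y : ℂ) ^ 2 := fun φ ↦
    ((Complex.measurable_ofReal.comp (mθ φ)).const_mul _).neg.sub
      ((Complex.measurable_ofReal.comp (mθ₁ φ)).pow_const 2)
  have : IsFiniteMeasure (volume.restrict (Metric.ball (0 : E) 1)) :=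
    ⟨by rw [Measure.restrict_apply_univ]; exact measure_ball_lt_top⟩
  have H1 := hasDerivAt_integral_of_bounded (μ := volume.restrict (Metric.ball (0 : E) 1))
    (F := fun φ y ↦ Complex.exp (Complex.I * (θ φ y : ℂ)))
    (F' := fun φ y ↦ Complex.I * (θ₁ φ y : ℂ) * Complex.exp (Complex.I * (θ φ y : ℂ)))
    (B := 1) (B' := 2 * |s|)
    (fun φ ↦ (me φ).aestronglyMeasurable) (fun φ ↦ ((me₁ φ).mul (me φ)).aestronglyMeasurable)
    (fun φ y ↦ (norm_exp_I_mul _).le)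
    (fun φ y ↦ by
      rw [norm_mul, norm_mul, norm_exp_I_mul, Complex.norm_I, Complex.norm_real, one_mul, mul_one]
      exact bθ₁ φ y)
    (fun φ y ↦ hasDerivAt_exp_I_mul (dθ φ y))
  have H2 := hasDerivAt_integral_of_bounded (μ := volume.restrict (Metric.ball (0 : E) 1))
    (F := fun φ y ↦ Complex.I * (θ₁ φ y : ℂ) * Complex.exp (Complex.I * (θ φ y : ℂ)))
    (F' := fun φ y ↦ (-(Complex.I * (θ φ y : ℂ)) - (θ₁ φ y : ℂ) ^ 2) *
      Complex.exp (Complex.I * (θ φ y : ℂ)))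
    (B := 2 * |s|) (B' := 2 * |s| + (2 * |s|) ^ 2)
    (fun φ ↦ ((me₁ φ).mul (me φ)).aestronglyMeasurable)
    (fun φ ↦ ((me₂ φ).mul (me φ)).aestronglyMeasurable)
    (fun φ y ↦ by
      rw [norm_mul, norm_mul, norm_exp_I_mul, Complex.norm_I, Complex.norm_real, one_mul, mul_one]
      exact bθ₁ φ y)
    (fun φ y ↦ by
      rw [norm_mul, norm_exp_I_mul, mul_one]
      refine (norm_sub_le _ _).trans (add_le_add ?_ ?_)
      · rw [norm_neg, norm_mul, Complex.norm_I, Complex.norm_real, one_mul]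
        exact bθ φ y
      · rw [norm_pow, Complex.norm_real]
        exact pow_le_pow_left₀ (norm_nonneg _) (bθ₁ φ y) 2)
    (fun φ y ↦ by
      refine (((dθ₁ φ y).ofReal_comp.const_mul Complex.I).mul
        (hasDerivAt_exp_I_mul (dθ φ y))).congr_deriv ?_
      push_cast
      linear_combination (θ₁ φ y : ℂ) ^ 2 * Complex.exp (Complex.I * (θ φ y : ℂ)) * Complex.I_sq)
  have hconst : ∀ φ, ∫ y in Metric.ball (0 : E) 1, Complex.exp (Complex.I * (θ φ y : ℂ)) =
      sphAvg (s • v) := fun φ ↦ by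
    have hnorm : ‖(s * cos φ) • v + (s * sin φ) • w‖ = ‖s • v‖ := by
      rw [← sq_eq_sq₀ (norm_nonneg _) (norm_nonneg _), norm_add_sq_real, inner_smul_left,
        inner_smul_right, hvw, norm_smul, norm_smul, norm_smul, hv, hw]
      simp only [mul_zero, add_zero, mul_one, Real.norm_eq_abs, sq_abs]
      linear_combination s ^ 2 * sin_sq_add_cos_sq φ
    rw [← sphAvg_eq_of_norm_eq hnorm, sphAvg]
    simp only [hθ, inner_add_right, inner_smul_right]
  have z1 : ∀ φ, ∫ y in Metric.ball (0 : E) 1, Complex.I * (θ₁ φ y : ℂ) *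
      Complex.exp (Complex.I * (θ φ y : ℂ)) = 0 := fun φ ↦ by
    have := H1 φ
    simp only [hconst] at this
    exact this.unique (hasDerivAt_const _ _)
  have z2 := H2 0
  simp only [z1] at z2
  have z3 := z2.unique (hasDerivAt_const _ _)
  simpa [hθ, hθ₁] using z3

theorem exists_asymptotics_sphAvg {ι : Type*} [Fintype ι] [DecidableEq ι]
    (b : OrthonormalBasis ι ℝ E) (i₀ : ι) (hι : 2 ≤ Fintype.card ι) :
    ∃ (α β : ℂ) (C : ℝ), 0 < C ∧ ∀ s : ℝ, 0 < s →
      ‖((s ^ (((Fintype.card ι : ℝ) - 1) / 2) : ℝ) : ℂ) * sphAvg (s • b i₀) -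
        (α * Complex.exp (Complex.I * s) + β * Complex.exp (-(Complex.I * s)))‖ ≤ C / (1 + s) := by
  have : IsFiniteMeasure (volume.restrict (Metric.ball (0 : E) 1)) :=
    ⟨by rw [Measure.restrict_apply_univ]; exact measure_ball_lt_top⟩
  set μ := volume.restrict (Metric.ball (0 : E) 1) with hμ
  set p : ι → E → ℝ := fun k y ↦ ⟪dir y, b k⟫_ℝ with hp
  set e : ℝ → E → ℂ := fun s y ↦ Complex.exp (Complex.I * ((s * p i₀ y : ℝ) : ℂ)) with he
  have mp : ∀ k, Measurable (p k) := fun k ↦ measurable_dir.inner measurable_const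
  have bp : ∀ k y, |p k y| ≤ 1 := fun k y ↦
    (abs_real_inner_le_norm _ _).trans (by rw [b.norm_eq_one, mul_one]; exact norm_dir_le y)
  have me : ∀ s, Measurable (e s) := fun s ↦
    ((Complex.measurable_ofReal.comp ((mp i₀).const_mul s)).const_mul _).cexp
  have mpc : ∀ k, Measurable fun y ↦ (p k y : ℂ) := fun k ↦ Complex.measurable_ofReal.comp (mp k)
  have be : ∀ s y, ‖e s y‖ = 1 := fun s y ↦ norm_exp_I_mul _
  have de : ∀ s y, HasDerivAt (fun s ↦ e s y) (Complex.I * p i₀ y * e s y) s := fun s y ↦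
    hasDerivAt_exp_I_mul (by simpa using (hasDerivAt_id s).mul_const (p i₀ y))
  have b1 : ∀ s y, ‖Complex.I * p i₀ y * e s y‖ ≤ 1 := fun s y ↦ by
    rw [norm_mul, norm_mul, be, Complex.norm_I, Complex.norm_real, one_mul, mul_one]
    exact bp i₀ y
  have b2 : ∀ k s y, ‖(p k y : ℂ) ^ 2 * e s y‖ ≤ 1 := fun k s y ↦ by
    rw [norm_mul, be, mul_one, norm_pow, Complex.norm_real]
    exact pow_le_one₀ (norm_nonneg _) (bp k y)
  have m1 : ∀ s, Measurable fun y ↦ Complex.I * p i₀ y * e s y := fun s ↦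
    ((mpc i₀).const_mul _).mul (me s)
  have m2 : ∀ k s, Measurable fun y ↦ (p k y : ℂ) ^ 2 * e s y := fun k s ↦
    ((mpc k).pow_const 2).mul (me s)
  have i0 : ∀ s, Integrable (e s) μ := fun s ↦
    (integrable_const (1 : ℝ)).mono' (me s).aestronglyMeasurable
      (Filter.Eventually.of_forall fun y ↦ (be s y).le)
  have i1 : ∀ s, Integrable (fun y ↦ Complex.I * p i₀ y * e s y) μ := fun s ↦
    (integrable_const (1 : ℝ)).mono' (m1 s).aestronglyMeasurable
      (Filter.Eventually.of_forall fun y ↦ b1 s y)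
  have i2 : ∀ k s, Integrable (fun y ↦ (p k y : ℂ) ^ 2 * e s y) μ := fun k s ↦
    (integrable_const (1 : ℝ)).mono' (m2 k s).aestronglyMeasurable
      (Filter.Eventually.of_forall fun y ↦ b2 k s y)
  have hj : ∀ s, sphAvg (s • b i₀) = ∫ y, e s y ∂μ := fun s ↦ by
    simp only [sphAvg, he, hp, inner_smul_right, hμ]
  have d0 := hasDerivAt_integral_of_bounded (μ := μ) (F := e) (B := 1) (B' := 1)
    (F' := fun s y ↦ Complex.I * p i₀ y * e s y) (fun s ↦ (me s).aestronglyMeasurable)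
    (fun s ↦ (m1 s).aestronglyMeasurable) (fun s y ↦ (be s y).le) b1 de
  have d1 := hasDerivAt_integral_of_bounded (μ := μ) (B := 1) (B' := 1)
    (F := fun s y ↦ Complex.I * p i₀ y * e s y)
    (F' := fun s y ↦ -((p i₀ y : ℂ) ^ 2 * e s y)) (fun s ↦ (m1 s).aestronglyMeasurable)
    (fun s ↦ (m2 i₀ s).neg.aestronglyMeasurable) b1 (fun s y ↦ by rw [norm_neg]; exact b2 i₀ s y)
    (fun s y ↦ by
      refine ((de s y).const_mul (Complex.I * (p i₀ y : ℂ))).congr_deriv ?_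
      linear_combination (p i₀ y : ℂ) ^ 2 * e s y * Complex.I_sq)
  have hmom : ∀ k, k ≠ i₀ → ∀ s : ℝ, (s : ℂ) * (∫ y, Complex.I * p i₀ y * e s y ∂μ) +
      (s : ℂ) ^ 2 * (∫ y, (p k y : ℂ) ^ 2 * e s y ∂μ) = 0 := fun k hk s ↦ by
    have := integral_second_moment (b.norm_eq_one i₀) (b.norm_eq_one k)
      (b.orthonormal.2 (Ne.symm hk)) s
    rw [← integral_const_mul, ← integral_const_mul,
      ← integral_add ((i1 s).const_mul _) ((i2 k s).const_mul _), ← neg_eq_zero, ← integral_neg,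
      ← this]
    refine integral_congr_ae (Filter.Eventually.of_forall fun y ↦ ?_)
    simp only [he, hp]
    push_cast
    ring
  have hsum : ∀ s, ∑ k, ∫ y, (p k y : ℂ) ^ 2 * e s y ∂μ = ∫ y, e s y ∂μ := fun s ↦ by
    rw [← integral_finsetSum _ fun k _ ↦ i2 k s]
    refine integral_congr_ae ?_
    have : Nontrivial E := by
      by_contra hE
      rw [not_nontrivial_iff_subsingleton] at hE
      have := b.norm_eq_one i₀
      rw [Subsingleton.elim (b i₀) 0, norm_zero] at this
      exact zero_ne_one this
    have hne : ∀ᵐ y ∂μ, y ≠ 0 := ae_restrict_of_ae (Measure.ae_ne volume 0)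
    filter_upwards [hne] with y hy
    rw [← Finset.sum_mul]
    have h1 : ∑ k, p k y ^ 2 = 1 := by
      have := b.sum_sq_norm_inner_left (dir y)
      simpa [norm_dir hy] using this
    have h2 : ∑ k, (p k y : ℂ) ^ 2 = 1 := by exact_mod_cast h1
    rw [h2, one_mul]
  have hm : 0 < ((Fintype.card ι : ℝ) - 1) / 2 := by
    have : (2 : ℝ) ≤ Fintype.card ι := by exact_mod_cast hι
    linarith
  simp only [hj]
  refine exists_asymptotics_of_bessel (V := ∫ _, (1 : ℝ) ∂μ) hm (fun s _ ↦ d0 s) (fun s _ ↦ d1 s)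
    (fun s _ ↦ ?_) fun s ↦ norm_integral_le_of_norm_le (integrable_const _)
      (Filter.Eventually.of_forall fun y ↦ (be s y).le)
  have h3 := Finset.sum_eq_zero fun k (hk : k ∈ Finset.univ.erase i₀) ↦
    hmom k (Finset.ne_of_mem_erase hk) s
  rw [Finset.sum_add_distrib, ← Finset.mul_sum, ← Finset.mul_sum, Finset.sum_const, Finset.card_erase_of_mem
    (Finset.mem_univ _), Finset.card_univ, nsmul_eq_mul, Nat.cast_sub (by omega)] at h3
  have h4 := Finset.add_sum_erase Finset.univ (fun k ↦ ∫ y, (p k y : ℂ) ^ 2 * e s y ∂μ)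
    (Finset.mem_univ i₀)
  rw [hsum] at h4
  rw [integral_neg]
  push_cast at h3 ⊢
  linear_combination h3 - (s : ℂ) ^ 2 * h4

end SphAvg

section RadialReduction

variable {E : Type*} [NormedAddCommGroup E] [MeasurableSpace E] [BorelSpace E]

theorem measurable_rpow_norm (a : ℝ) : Measurable fun ξ : E ↦ ‖ξ‖ ^ a :=
  measurable_norm.pow_const a

variable [InnerProductSpace ℝ E] [FiniteDimensional ℝ E]

theorem integral_exp_inner_mul_eq_of_norm_eq {H : E → ℂ} (hH : ∀ x y, ‖x‖ = ‖y‖ → H x = H y)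
    {v w : E} (h : ‖v‖ = ‖w‖) :
    ∫ ξ, Complex.exp (Complex.I * ((⟪v, ξ⟫_ℝ : ℝ) : ℂ)) * H ξ =
      ∫ ξ, Complex.exp (Complex.I * ((⟪w, ξ⟫_ℝ : ℝ) : ℂ)) * H ξ := by
  set L : E ≃ₗᵢ[ℝ] E := (ℝ ∙ (v - w))ᗮ.reflection
  have hL : L v = w := Submodule.reflection_sub h
  rw [← L.measurePreserving.integral_comp L.toHomeomorph.measurableEmbedding
    (fun ξ ↦ Complex.exp (Complex.I * ((⟪w, ξ⟫_ℝ : ℝ) : ℂ)) * H ξ)]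
  refine integral_congr_ae (Filter.Eventually.of_forall fun ξ ↦ ?_)
  simp only [← hL, L.inner_map_map, hH (L ξ) ξ (L.norm_map ξ)]

theorem integral_exp_inner_mul_eq_integral_sphAvg [Nontrivial E] {H : E → ℂ} (hi : Integrable H)
    (hH : ∀ x y, ‖x‖ = ‖y‖ → H x = H y) {e : E} (he : ‖e‖ = 1) (x : E) :
    (volume.real (Metric.ball (0 : E) 1) : ℂ) *
        ∫ ξ, Complex.exp (Complex.I * ((⟪x, ξ⟫_ℝ : ℝ) : ℂ)) * H ξ =
      ∫ ξ, sphAvg ((‖x‖ * ‖ξ‖) • e) * H ξ := by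
  have : IsFiniteMeasure (volume.restrict (Metric.ball (0 : E) 1)) :=
    ⟨by rw [Measure.restrict_apply_univ]; exact measure_ball_lt_top⟩
  have h1 : (volume.real (Metric.ball (0 : E) 1) : ℂ) *
        ∫ ξ, Complex.exp (Complex.I * ((⟪x, ξ⟫_ℝ : ℝ) : ℂ)) * H ξ =
      ∫ y in Metric.ball (0 : E) 1,
        ∫ ξ, Complex.exp (Complex.I * ((⟪‖x‖ • dir y, ξ⟫_ℝ : ℝ) : ℂ)) * H ξ := by
    rw [← Complex.real_smul, ← setIntegral_const]
    refine integral_congr_ae ?_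
    filter_upwards [ae_restrict_of_ae (Measure.ae_ne volume (0 : E))] with y hy
    refine integral_exp_inner_mul_eq_of_norm_eq hH ?_
    rw [norm_smul, norm_norm, norm_dir hy, mul_one]
  rw [h1, integral_integral_swap]
  · refine integral_congr_ae (Filter.Eventually.of_forall fun ξ ↦ ?_)
    have h2 : ‖(‖x‖ * ‖ξ‖) • e‖ = ‖‖x‖ • ξ‖ := by
      rw [norm_smul, norm_smul, he, mul_one, norm_mul, norm_norm, norm_norm]
    beta_reduce
    rw [sphAvg_eq_of_norm_eq h2, integral_mul_const]
    simp only [sphAvg, real_inner_smul_left, real_inner_smul_right]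
  · refine (hi.norm.comp_snd _).mono' ?_ (Filter.Eventually.of_forall fun z ↦ ?_)
    · refine AEStronglyMeasurable.mul ?_ (hi.comp_snd _).aestronglyMeasurable
      refine Measurable.aestronglyMeasurable (Measurable.cexp (Measurable.const_mul
        (Complex.measurable_ofReal.comp ?_) _))
      exact ((measurable_dir.comp measurable_fst).const_smul ‖x‖).inner measurable_snd
    · simp only [Function.uncurry, norm_mul, norm_exp_I_mul, one_mul, le_refl]

/-- The unnormalized oscillatory integral with phase `⟪x, ξ⟫ + t ‖ξ‖ ^ a`. -/
def osc (a : ℝ) (h : E → ℂ) (x : E) (t : ℝ) : ℂ :=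
  ∫ ξ, Complex.exp (Complex.I * ((⟪x, ξ⟫_ℝ + t * ‖ξ‖ ^ a : ℝ) : ℂ)) * h ξ

theorem osc_eq (a : ℝ) (h : E → ℂ) (x : E) (t : ℝ) :
    osc a h x t = ∫ ξ, Complex.exp (Complex.I * ((⟪x, ξ⟫_ℝ : ℝ) : ℂ)) *
      (Complex.exp (Complex.I * ((t * ‖ξ‖ ^ a : ℝ) : ℂ)) * h ξ) := by
  refine integral_congr_ae (Filter.Eventually.of_forall fun ξ ↦ ?_)
  simp only [← mul_assoc, ← Complex.exp_add]
  push_cast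
  ring_nf

theorem osc_eq_of_norm_eq (a : ℝ) {h : E → ℂ} (hh : ∀ x y, ‖x‖ = ‖y‖ → h x = h y) {x y : E}
    (hxy : ‖x‖ = ‖y‖) (t : ℝ) : osc a h x t = osc a h y t := by
  rw [osc_eq, osc_eq]
  exact integral_exp_inner_mul_eq_of_norm_eq (fun x y hxy ↦ by rw [hxy, hh x y hxy]) hxy

theorem continuous_osc (a : ℝ) {h : E → ℂ} (hi : Integrable h) (x : E) :
    Continuous (osc a h x) := by
  refine continuous_of_dominated (bound := fun ξ ↦ ‖h ξ‖) (fun t ↦ ?_) (fun t ↦ ?_) hi.norm ?_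
  · refine AEStronglyMeasurable.mul ?_ hi.aestronglyMeasurable
    refine Measurable.aestronglyMeasurable (Measurable.cexp (Measurable.const_mul
      (Complex.measurable_ofReal.comp ?_) _))
    exact (measurable_const.inner measurable_id).add ((measurable_rpow_norm a).const_mul t)
  · refine Filter.Eventually.of_forall fun ξ ↦ ?_
    rw [norm_mul, norm_exp_I_mul, one_mul]
  · refine Filter.Eventually.of_forall fun ξ ↦ ?_
    fun_prop

theorem continuous_sphAvg : Continuous (sphAvg : E → ℂ) := by
  have : IsFiniteMeasure (volume.restrict (Metric.ball (0 : E) 1)) :=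
    ⟨by rw [Measure.restrict_apply_univ]; exact measure_ball_lt_top⟩
  refine continuous_of_dominated (bound := fun _ ↦ 1) (fun v ↦ ?_) (fun v ↦ ?_)
    (integrable_const _) ?_
  · exact Measurable.aestronglyMeasurable (Measurable.cexp (Measurable.const_mul
      (Complex.measurable_ofReal.comp (measurable_dir.inner measurable_const)) _))
  · exact Filter.Eventually.of_forall fun y ↦ (norm_exp_I_mul _).le
  · refine Filter.Eventually.of_forall fun y ↦ ?_
    fun_prop

/-- The amplitude obtained from a radial function `h` by passing to polar coordinates and
substituting `r = η ^ 2`. -/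
def radialAmp (h : E → ℂ) (e : E) (η : ℝ) : ℂ :=
  ((2 * η ^ Module.finrank ℝ E : ℝ) : ℂ) * h ((η ^ 2) • e)

theorem rpow_mul_osc_eq [Nontrivial E] (a : ℝ) {h : E → ℂ} (hi : Integrable h)
    (hh : ∀ x y, ‖x‖ = ‖y‖ → h x = h y) {e : E} (he : ‖e‖ = 1) {x : E} (hx : x ≠ 0) (t : ℝ) :
    ((‖x‖ ^ (((Module.finrank ℝ E : ℝ) - 1) / 2) : ℝ) : ℂ) * osc a h x t =
      (Module.finrank ℝ E : ℂ) * ∫ η in Set.Ioi (0 : ℝ),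
        (((‖x‖ * η ^ 2) ^ (((Module.finrank ℝ E : ℝ) - 1) / 2) : ℝ) : ℂ) *
          sphAvg ((‖x‖ * η ^ 2) • e) * (oscFactor (2 * a) 0 t η * radialAmp h e η) := by
  set d := Module.finrank ℝ E with hd
  have hd1 : 1 ≤ d := Module.finrank_pos
  set V := volume.real (Metric.ball (0 : E) 1) with hV
  have hV0 : V ≠ 0 := (ENNReal.toReal_pos (Metric.measure_ball_pos volume 0 one_pos).ne'
    measure_ball_lt_top.ne).ne'
  set H : E → ℂ := fun ξ ↦ Complex.exp (Complex.I * ((t * ‖ξ‖ ^ a : ℝ) : ℂ)) * h ξ with hH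
  have hHi : Integrable H := by
    refine hi.norm.mono' (AEStronglyMeasurable.mul ?_ hi.aestronglyMeasurable)
      (Filter.Eventually.of_forall fun ξ ↦ by rw [norm_mul, norm_exp_I_mul, one_mul])
    exact Measurable.aestronglyMeasurable (Measurable.cexp (Measurable.const_mul
      (Complex.measurable_ofReal.comp ((measurable_rpow_norm a).const_mul t)) _))
  have h1 := integral_exp_inner_mul_eq_integral_sphAvg hHi
    (fun x y hxy ↦ by simp only [hH, hxy, hh x y hxy]) he x
  rw [← osc_eq] at h1
  set k : ℝ → ℂ := fun r ↦ sphAvg ((‖x‖ * r) • e) *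
      (Complex.exp (Complex.I * ((t * r ^ a : ℝ) : ℂ)) * h (r • e)) with hk
  have h2 : ∫ ξ, sphAvg ((‖x‖ * ‖ξ‖) • e) * H ξ = ∫ ξ : E, k ‖ξ‖ := by
    refine integral_congr_ae (Filter.Eventually.of_forall fun ξ ↦ ?_)
    simp only [hH, hk]
    rw [hh ξ (‖ξ‖ • e) (by rw [norm_smul, norm_norm, he, mul_one])]
  rw [h2, integral_fun_norm_addHaar volume k, ← integral_comp_rpow_Ioi _ (two_ne_zero), ← hV, ← hd,
    nsmul_eq_mul, Complex.real_smul, mul_left_comm] at h1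
  have h3 := mul_left_cancel₀ (by exact_mod_cast hV0) h1
  rw [h3, mul_left_comm, ← integral_const_mul]
  congr 1
  refine setIntegral_congr_fun measurableSet_Ioi fun η hη ↦ ?_
  have hη : 0 < η := hη
  have hρ : 0 < ‖x‖ := norm_pos_iff.2 hx
  have e1 : (‖x‖ * η ^ 2) ^ (((d : ℝ) - 1) / 2) = ‖x‖ ^ (((d : ℝ) - 1) / 2) * η ^ (d - 1) := by
    rw [Real.mul_rpow hρ.le (by positivity), ← Real.rpow_natCast η 2, ← Real.rpow_mul hη.le,
      ← Real.rpow_natCast η (d - 1), Nat.cast_sub hd1]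
    congr 2
    push_cast; ring
  have e2 : t * (η ^ 2) ^ a = 0 * η ^ 2 + t * η ^ (2 * a) := by
    rw [← Real.rpow_natCast η 2, ← Real.rpow_mul hη.le]; push_cast; ring
  have e3 : (2 : ℝ) - 1 = 1 := by norm_num
  obtain ⟨l, hl⟩ : ∃ l, d = l + 1 := ⟨d - 1, by omega⟩
  simp only [hk, e3, Real.rpow_one, Real.rpow_two, abs_two, Complex.real_smul]
  rw [e1, e2]
  simp only [oscFactor, radialAmp, ← hd, hl, Nat.add_sub_cancel]
  push_cast
  ring

end RadialReduction

theorem sq_integral_mul_norm_le {X : Type*} [MeasurableSpace X] {μ : Measure X} {f : X → ℝ}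
    {g : X → ℂ} (hf0 : ∀ x, 0 ≤ f x) (hf : AEStronglyMeasurable f μ)
    (hg : AEStronglyMeasurable g μ) (hf2 : Integrable (fun x ↦ f x ^ 2) μ)
    (hg2 : Integrable (fun x ↦ ‖g x‖ ^ 2) μ) :
    (∫ x, f x * ‖g x‖ ∂μ) ^ 2 ≤ (∫ x, f x ^ 2 ∂μ) * ∫ x, ‖g x‖ ^ 2 ∂μ := by
  have h2 : ENNReal.ofReal 2 = 2 := by norm_num
  have h := integral_mul_norm_le_Lp_mul_Lq (μ := μ) (f := fun x ↦ (f x : ℂ)) (g := g)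
    Real.HolderConjugate.two_two
    (by
      rw [h2, memLp_two_iff_integrable_sq_norm
        (Complex.continuous_ofReal.comp_aestronglyMeasurable hf)]
      simpa using hf2)
    (by rw [h2, memLp_two_iff_integrable_sq_norm hg]; exact hg2)
  simp only [Complex.norm_real, Real.norm_of_nonneg (hf0 _), Real.rpow_two] at h
  rw [← Real.sqrt_eq_rpow, ← Real.sqrt_eq_rpow] at h
  have h0 : 0 ≤ ∫ x, f x * ‖g x‖ ∂μ :=
    integral_nonneg fun x ↦ mul_nonneg (hf0 x) (norm_nonneg _)
  have h1 : 0 ≤ ∫ x, f x ^ 2 ∂μ := integral_nonneg fun x ↦ sq_nonneg _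
  have h3 : 0 ≤ ∫ x, ‖g x‖ ^ 2 ∂μ := integral_nonneg fun x ↦ sq_nonneg _
  calc _ ≤ (√(∫ x, f x ^ 2 ∂μ) * √(∫ x, ‖g x‖ ^ 2 ∂μ)) ^ 2 := pow_le_pow_left₀ h0 h 2
    _ = _ := by rw [mul_pow, Real.sq_sqrt h1, Real.sq_sqrt h3]

theorem integrable_inv_one_add_mul_sq {ρ : ℝ} (hρ : 0 < ρ) :
    Integrable fun η : ℝ ↦ (1 + ρ * η ^ 2)⁻¹ := by
  have := integrable_inv_one_add_sq.comp_mul_left' (Real.sqrt_pos.2 hρ).ne'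
  simpa only [mul_pow, Real.sq_sqrt hρ.le] using this

theorem integral_inv_one_add_mul_sq {ρ : ℝ} (hρ : 0 < ρ) :
    ∫ η : ℝ, (1 + ρ * η ^ 2)⁻¹ = ρ ^ (-(1 / 2) : ℝ) * π := by
  have := Measure.integral_comp_mul_left (fun x : ℝ ↦ (1 + x ^ 2)⁻¹) √ρ
  simp only [mul_pow, Real.sq_sqrt hρ.le, integral_univ_inv_one_add_sq] at this
  rw [this, abs_of_nonneg (by positivity), Real.rpow_neg hρ.le, Real.sqrt_eq_rpow, smul_eq_mul]

theorem sq_integral_inv_mul_norm_le {ρ : ℝ} (hρ : 0 < ρ) {C : ℝ} (hC : 0 ≤ C) {G : ℝ → ℂ}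
    (hG : Measurable G) (hG2 : IntegrableOn (fun η ↦ ‖G η‖ ^ 2) (Set.Ioi 0)) :
    (∫ η in Set.Ioi 0, C / (1 + ρ * η ^ 2) * ‖G η‖) ^ 2 ≤
      C ^ 2 * π * ρ ^ (-(1 / 2) : ℝ) * ∫ η in Set.Ioi 0, ‖G η‖ ^ 2 := by
  have hi := (integrable_inv_one_add_mul_sq hρ).const_mul (C ^ 2)
  have hle : ∀ η : ℝ, (C / (1 + ρ * η ^ 2)) ^ 2 ≤ C ^ 2 * (1 + ρ * η ^ 2)⁻¹ := fun η ↦ by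
    have h1 : (1 + ρ * η ^ 2)⁻¹ ≤ 1 := inv_le_one_of_one_le₀ (by nlinarith [sq_nonneg η])
    have h2 : 0 ≤ (1 + ρ * η ^ 2)⁻¹ := by positivity
    rw [div_eq_mul_inv, mul_pow]
    exact mul_le_mul_of_nonneg_left (by nlinarith) (sq_nonneg C)
  have hm : Measurable fun η : ℝ ↦ C / (1 + ρ * η ^ 2) := by fun_prop
  have hi2 : Integrable fun η : ℝ ↦ (C / (1 + ρ * η ^ 2)) ^ 2 := by
    refine hi.mono' (hm.pow_const 2).aestronglyMeasurable (Filter.Eventually.of_forall fun η ↦ ?_)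
    rw [Real.norm_of_nonneg (sq_nonneg _)]
    exact hle η
  refine (sq_integral_mul_norm_le (fun η ↦ by positivity) hm.aestronglyMeasurable
    hG.aestronglyMeasurable hi2.integrableOn hG2).trans ?_
  refine mul_le_mul_of_nonneg_right ?_ (integral_nonneg fun η ↦ sq_nonneg _)
  calc ∫ η in Set.Ioi 0, (C / (1 + ρ * η ^ 2)) ^ 2
      ≤ ∫ η, (C / (1 + ρ * η ^ 2)) ^ 2 :=
        setIntegral_le_integral hi2 (Filter.Eventually.of_forall fun η ↦ sq_nonneg _)
    _ ≤ ∫ η : ℝ, C ^ 2 * (1 + ρ * η ^ 2)⁻¹ := integral_mono hi2 hi hle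
    _ = C ^ 2 * π * ρ ^ (-(1 / 2) : ℝ) := by
      rw [integral_const_mul, integral_inv_one_add_mul_sq hρ]; ring

theorem oscFactor_eq_exp_mul (b ρ t η : ℝ) :
    oscFactor b ρ t η = Complex.exp (Complex.I * ((ρ * η ^ 2 : ℝ) : ℂ)) * oscFactor b 0 t η := by
  rw [oscFactor, oscFactor, ← Complex.exp_add]
  push_cast
  ring_nf

theorem norm_integral_mul_oscFactor_le {φ : ℝ → ℂ} {α β : ℂ} {C b ρ : ℝ} (hb : 0 ≤ b)
    (hρ : 0 < ρ) (hC : 0 ≤ C) (hφm : Measurable φ)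
    (hφ : ∀ s : ℝ, 0 < s →
      ‖φ s - (α * Complex.exp (Complex.I * s) + β * Complex.exp (-(Complex.I * s)))‖ ≤ C / (1 + s))
    {G : ℝ → ℂ} (hG : Measurable G) (hG1 : IntegrableOn G (Set.Ioi 0)) (t : ℝ) :
    ‖∫ η in Set.Ioi (0 : ℝ), φ (ρ * η ^ 2) * (oscFactor b 0 t η * G η)‖ ≤
      ‖α‖ * ‖oscInt b G ρ t‖ + ‖β‖ * ‖oscInt b G (-ρ) t‖ +
        ∫ η in Set.Ioi 0, C / (1 + ρ * η ^ 2) * ‖G η‖ := by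
  set R : ℝ → ℂ := fun η ↦ (φ (ρ * η ^ 2) -
    (α * Complex.exp (Complex.I * ((ρ * η ^ 2 : ℝ) : ℂ)) +
      β * Complex.exp (-(Complex.I * ((ρ * η ^ 2 : ℝ) : ℂ))))) * (oscFactor b 0 t η * G η) with hR
  have hRle : ∀ η ∈ Set.Ioi (0 : ℝ), ‖R η‖ ≤ C / (1 + ρ * η ^ 2) * ‖G η‖ := fun η hη ↦ by
    have hη : 0 < η := hη
    rw [hR, norm_mul, norm_mul, norm_oscFactor, one_mul]
    exact mul_le_mul_of_nonneg_right (hφ _ (by positivity)) (norm_nonneg _)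
  have hle : ∀ η : ℝ, C / (1 + ρ * η ^ 2) ≤ C := fun η ↦
    div_le_self hC (by nlinarith [sq_nonneg η])
  have hq : Measurable fun η : ℝ ↦ ρ * η ^ 2 := by fun_prop
  have ho : Measurable fun η : ℝ ↦ oscFactor b 0 t η :=
    (continuous_oscFactor hb).measurable.comp
      (measurable_const.prodMk (measurable_const.prodMk measurable_id))
  have hRm : Measurable R := by
    refine Measurable.mul ((hφm.comp hq).sub ?_) (ho.mul hG)
    have := Complex.measurable_ofReal.comp hq
    exact ((this.const_mul Complex.I).cexp.const_mul α).add
      ((this.const_mul Complex.I).neg.cexp.const_mul β)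
  have hRi : IntegrableOn R (Set.Ioi 0) := by
    refine (hG1.norm.const_mul C).mono' hRm.aestronglyMeasurable ?_
    filter_upwards [ae_restrict_mem measurableSet_Ioi] with η hη
    exact (hRle η hη).trans (mul_le_mul_of_nonneg_right (hle η) (norm_nonneg _))
  have hdi : IntegrableOn (fun η ↦ C / (1 + ρ * η ^ 2) * ‖G η‖) (Set.Ioi 0) := by
    have hm : Measurable fun η : ℝ ↦ C / (1 + ρ * η ^ 2) := by fun_prop
    refine (hG1.norm.const_mul C).mono' (hm.mul hG.norm).aestronglyMeasurable
      (Filter.Eventually.of_forall fun η ↦ ?_)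
    rw [Real.norm_of_nonneg (by positivity)]
    exact mul_le_mul_of_nonneg_right (hle η) (norm_nonneg _)
  have h1 := (integrableOn_oscFactor_mul hb hG1 ρ t).const_mul α
  have h2 := (integrableOn_oscFactor_mul hb hG1 (-ρ) t).const_mul β
  have h12 : IntegrableOn (fun η ↦ α * (oscFactor b ρ t η * G η) +
      β * (oscFactor b (-ρ) t η * G η)) (Set.Ioi 0) := h1.add h2
  have hsplit : ∫ η in Set.Ioi (0 : ℝ), φ (ρ * η ^ 2) * (oscFactor b 0 t η * G η) =
      α * oscInt b G ρ t + β * oscInt b G (-ρ) t + ∫ η in Set.Ioi 0, R η := by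
    rw [oscInt, oscInt, ← integral_const_mul, ← integral_const_mul, ← integral_add h1 h2,
      ← integral_add h12 hRi]
    refine integral_congr_ae (Filter.Eventually.of_forall fun η ↦ ?_)
    simp only [hR, oscFactor_eq_exp_mul b ρ, oscFactor_eq_exp_mul b (-ρ)]
    push_cast
    simp only [neg_mul, mul_neg]
    ring
  rw [hsplit]
  refine (norm_add₃_le).trans (add_le_add (add_le_add (norm_mul _ _).le (norm_mul _ _).le) ?_)
  exact (norm_integral_le_integral_norm _).trans
    (setIntegral_mono_on hRi.norm hdi measurableSet_Ioi hRle)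

section Amplitude

variable {E : Type*} [NormedAddCommGroup E] [InnerProductSpace ℝ E]

theorem continuous_radialAmp {h : E → ℂ} (hc : Continuous h) (e : E) :
    Continuous (radialAmp h e) := by
  unfold radialAmp
  fun_prop

theorem exists_norm_radialAmp_le (h : SchwartzMap E ℂ) {e : E} (he : ‖e‖ = 1) :
    ∃ B : ℝ, ∀ η : ℝ, 0 < η → ‖radialAmp h e η‖ ≤ B * (1 + η ^ 2)⁻¹ := by
  set d := Module.finrank ℝ E with hd
  have dec : ∀ k : ℕ, ∃ C : ℝ, ∀ s : ℝ, 0 < s → s ^ k * ‖h (s • e)‖ ≤ C := fun k ↦ by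
    obtain ⟨C, -, hC⟩ := h.decay k 0
    refine ⟨C, fun s hs ↦ ?_⟩
    have := hC (s • e)
    rwa [norm_iteratedFDeriv_zero, norm_smul, he, mul_one, Real.norm_of_nonneg hs.le] at this
  obtain ⟨C₀, h₀⟩ := dec 0
  obtain ⟨C₁, h₁⟩ := dec 1
  obtain ⟨C₂, h₂⟩ := dec d
  obtain ⟨C₃, h₃⟩ := dec (d + 1)
  refine ⟨2 * (C₀ + C₁ + C₂ + C₃), fun η hη ↦ ?_⟩
  have hs : 0 < η ^ 2 := by positivity
  have e0 := h₀ _ hs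
  have e1 := h₁ _ hs
  have e2 := h₂ _ hs
  have e3 := h₃ _ hs
  rw [← div_eq_mul_inv, le_div_iff₀ (by positivity), radialAmp, norm_mul, Complex.norm_real,
    Real.norm_of_nonneg (by positivity), ← hd]
  have h4 : η ^ d ≤ 1 + (η ^ 2) ^ d := by
    rw [← pow_mul, mul_comm 2 d, pow_mul]
    nlinarith [sq_nonneg (η ^ d - 1)]
  have h5 : 0 ≤ ‖h (η ^ 2 • e)‖ * (1 + η ^ 2) := by positivity
  have h6 := mul_le_mul_of_nonneg_right h4 h5
  rw [pow_succ] at e3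
  nlinarith

theorem integrableOn_radialAmp (h : SchwartzMap E ℂ) {e : E} (he : ‖e‖ = 1) :
    IntegrableOn (radialAmp h e) (Set.Ioi 0) := by
  obtain ⟨B, hB⟩ := exists_norm_radialAmp_le h he
  refine (integrable_inv_one_add_sq.const_mul B).integrableOn.mono'
    (continuous_radialAmp h.continuous e).aestronglyMeasurable ?_
  filter_upwards [ae_restrict_mem measurableSet_Ioi] with η hη
  exact hB η hη

theorem integrableOn_norm_sq_radialAmp (h : SchwartzMap E ℂ) {e : E} (he : ‖e‖ = 1) :
    IntegrableOn (fun η ↦ ‖radialAmp h e η‖ ^ 2) (Set.Ioi 0) := by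
  obtain ⟨B, hB⟩ := exists_norm_radialAmp_le h he
  refine (integrable_inv_one_add_sq.const_mul (B ^ 2)).integrableOn.mono'
    ((continuous_radialAmp h.continuous e).norm.pow 2).aestronglyMeasurable ?_
  filter_upwards [ae_restrict_mem measurableSet_Ioi] with η hη
  rw [Real.norm_of_nonneg (sq_nonneg _)]
  refine (pow_le_pow_left₀ (norm_nonneg _) (hB η hη) 2).trans ?_
  have h1 : (1 + η ^ 2)⁻¹ ≤ 1 := inv_le_one_of_one_le₀ (by nlinarith [sq_nonneg η])
  have h2 : 0 ≤ (1 + η ^ 2)⁻¹ := by positivity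
  rw [mul_pow]
  exact mul_le_mul_of_nonneg_left (by nlinarith) (sq_nonneg B)

variable [FiniteDimensional ℝ E] [MeasurableSpace E] [BorelSpace E]

theorem integral_norm_sq_radialAmp [Nontrivial E] {h : E → ℂ}
    (hh : ∀ x y, ‖x‖ = ‖y‖ → h x = h y) {e : E} (he : ‖e‖ = 1) :
    (Module.finrank ℝ E : ℝ) * (volume.real (Metric.ball (0 : E) 1) *
      ∫ η in Set.Ioi 0, ‖radialAmp h e η‖ ^ 2) = 2 * ∫ ξ, ‖ξ‖ ^ (1 / 2 : ℝ) * ‖h ξ‖ ^ 2 := by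
  set d := Module.finrank ℝ E with hd
  have hd1 : 1 ≤ d := Module.finrank_pos
  set k : ℝ → ℝ := fun r ↦ 2 * (r ^ (1 / 2 : ℝ) * ‖h (r • e)‖ ^ 2) with hk
  have h1 : 2 * ∫ ξ, ‖ξ‖ ^ (1 / 2 : ℝ) * ‖h ξ‖ ^ 2 = ∫ ξ : E, k ‖ξ‖ := by
    rw [← integral_const_mul]
    refine integral_congr_ae (Filter.Eventually.of_forall fun ξ ↦ ?_)
    simp only [hk]
    rw [hh ξ (‖ξ‖ • e) (by rw [norm_smul, norm_norm, he, mul_one])]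
  rw [h1, integral_fun_norm_addHaar volume k, ← hd,
    ← integral_comp_rpow_Ioi (fun y ↦ y ^ (d - 1) • k y) (two_ne_zero), nsmul_eq_mul, smul_eq_mul]
  congr 2
  refine setIntegral_congr_fun measurableSet_Ioi fun η hη ↦ ?_
  have hη : 0 < η := hη
  have e1 : (η ^ 2) ^ (1 / 2 : ℝ) = η := by
    rw [← Real.sqrt_eq_rpow, Real.sqrt_sq hη.le]
  have e3 : (2 : ℝ) - 1 = 1 := by norm_num
  obtain ⟨l, hl⟩ : ∃ l, d = l + 1 := ⟨d - 1, by omega⟩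
  simp only [hk, e3, Real.rpow_one, Real.rpow_two, abs_two, smul_eq_mul, e1, radialAmp, ← hd,
    norm_mul, Complex.norm_real, hl, Nat.add_sub_cancel, mul_pow, norm_pow,
    Real.norm_of_nonneg hη.le, Real.norm_of_nonneg (zero_le_two (α := ℝ))]
  ring

end Amplitude

theorem integrableOn_rpow_neg_half :
    IntegrableOn (fun x : ℝ ↦ x ^ (-(1 / 2) : ℝ)) (Set.Ioo 0 1) := by
  have h := intervalIntegral.intervalIntegrable_rpow' (a := 0) (b := 1) (r := (-(1 / 2) : ℝ))
    (by norm_num)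
  rw [intervalIntegrable_iff_integrableOn_Ioo_of_le zero_le_one] at h
  exact h

theorem setIntegral_rpow_neg_half : ∫ x in Set.Ioo (0 : ℝ) 1, x ^ (-(1 / 2) : ℝ) = 2 := by
  rw [← integral_Ioc_eq_integral_Ioo, ← intervalIntegral.integral_of_le zero_le_one,
    integral_rpow (Or.inl (by norm_num))]
  norm_num

/-- The square of the maximal function of `oscInt` along a dense sequence of times. -/
def oscSup (b : ℝ) (G : ℝ → ℂ) (x : ℝ) : ENNReal :=
  ⨆ k, ‖oscInt b G x (TopologicalSpace.denseSeq ℝ k)‖ₑ ^ 2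

theorem measurable_oscSup {b : ℝ} (hb : 0 ≤ b) {G : ℝ → ℂ} (hG : Measurable G) :
    Measurable (oscSup b G) :=
  Measurable.iSup fun k ↦ (measurable_oscInt hb hG
    (measurable_const (a := TopologicalSpace.denseSeq ℝ k)) (Set.Ioi 0)).enorm.pow_const 2

theorem oscSup_lt_top (b : ℝ) {G : ℝ → ℂ} (hG : IntegrableOn G (Set.Ioi 0)) (x : ℝ) :
    oscSup b G x < ⊤ := by
  refine lt_of_le_of_lt (iSup_le fun k ↦ ?_) (ENNReal.pow_lt_top (n := 2) hG.2)
  refine pow_le_pow_left' ((enorm_integral_le_lintegral_enorm _).trans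
    (lintegral_mono fun η ↦ ?_)) 2
  rw [enorm_mul, ← ofReal_norm (oscFactor _ _ _ _), norm_oscFactor, ENNReal.ofReal_one, one_mul]

theorem norm_sq_oscInt_le (b : ℝ) {G : ℝ → ℂ} (hG : IntegrableOn G (Set.Ioi 0)) (x : ℝ) (k : ℕ) :
    ‖oscInt b G x (TopologicalSpace.denseSeq ℝ k)‖ ^ 2 ≤ (oscSup b G x).toReal := by
  have h := ENNReal.toReal_mono (oscSup_lt_top b hG x).ne
    (le_iSup (fun k ↦ ‖oscInt b G x (TopologicalSpace.denseSeq ℝ k)‖ₑ ^ 2) k)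
  simpa using h

theorem integrableOn_and_setIntegral_le_of_lintegral_le {U : ℝ → ENNReal} (hU : Measurable U)
    (hfin : ∀ x, U x < ⊤) {S : Set ℝ} {B : ℝ} (hB : 0 ≤ B)
    (h : ∫⁻ x in S, U x ≤ ENNReal.ofReal B) :
    IntegrableOn (fun x ↦ (U x).toReal) S ∧ ∫ x in S, (U x).toReal ≤ B := by
  refine ⟨integrable_toReal_of_lintegral_ne_top hU.aemeasurable
    (h.trans_lt ENNReal.ofReal_lt_top).ne, ?_⟩
  rw [integral_toReal hU.aemeasurable (Filter.Eventually.of_forall hfin)]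
  exact ENNReal.toReal_le_of_le_ofReal hB h

section Maximal

variable {E : Type*} [NormedAddCommGroup E] [InnerProductSpace ℝ E] [FiniteDimensional ℝ E]
  [MeasurableSpace E] [BorelSpace E]

theorem integrable_bessel_mul_norm_sq (h : SchwartzMap E ℂ) :
    Integrable fun ξ ↦ (1 + ‖ξ‖ ^ 2) ^ (1 / 4 : ℝ) * ‖h ξ‖ ^ 2 := by
  obtain ⟨C, hC0, hC⟩ := h.decay 0 0
  have hC' : ∀ ξ, ‖h ξ‖ ≤ C := fun ξ ↦ by simpa using hC ξ
  refine (((h.integrable_pow_mul volume 0).add (h.integrable_pow_mul volume 2)).const_mul C).mono'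
    ?_ (Filter.Eventually.of_forall fun ξ ↦ ?_)
  · refine Continuous.aestronglyMeasurable (Continuous.mul ?_ (h.continuous.norm.pow 2))
    exact (continuous_const.add (continuous_norm.pow 2)).rpow_const fun ξ ↦ Or.inr (by norm_num)
  · have h1 : (1 + ‖ξ‖ ^ 2) ^ (1 / 4 : ℝ) ≤ 1 + ‖ξ‖ ^ 2 := by
      have h3 : 1 ≤ 1 + ‖ξ‖ ^ 2 := by nlinarith [sq_nonneg ‖ξ‖]
      simpa using Real.rpow_le_rpow_of_exponent_le h3 (by norm_num : (1 / 4 : ℝ) ≤ 1)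
    have h2 := hC' ξ
    have h0 := norm_nonneg (h ξ)
    rw [Real.norm_of_nonneg (by positivity), Pi.add_apply, pow_zero, one_mul]
    calc (1 + ‖ξ‖ ^ 2) ^ (1 / 4 : ℝ) * ‖h ξ‖ ^ 2
        ≤ (1 + ‖ξ‖ ^ 2) * (C * ‖h ξ‖) := by
          refine mul_le_mul h1 ?_ (by positivity) (by positivity)
          rw [sq]; exact mul_le_mul_of_nonneg_right h2 h0
      _ = C * (‖h ξ‖ + ‖ξ‖ ^ 2 * ‖h ξ‖) := by ring

theorem integral_rpow_half_mul_le (h : SchwartzMap E ℂ) :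
    ∫ ξ, ‖ξ‖ ^ (1 / 2 : ℝ) * ‖h ξ‖ ^ 2 ≤ ∫ ξ, (1 + ‖ξ‖ ^ 2) ^ (1 / 4 : ℝ) * ‖h ξ‖ ^ 2 := by
  refine integral_mono_of_nonneg (Filter.Eventually.of_forall fun ξ ↦ by positivity)
    (integrable_bessel_mul_norm_sq h) (Filter.Eventually.of_forall fun ξ ↦ ?_)
  refine mul_le_mul_of_nonneg_right ?_ (sq_nonneg _)
  have e1 : ‖ξ‖ ^ (1 / 2 : ℝ) = (‖ξ‖ ^ 2) ^ (1 / 4 : ℝ) := by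
    rw [← Real.rpow_natCast, ← Real.rpow_mul (norm_nonneg ξ)]
    norm_num
  rw [e1]
  exact Real.rpow_le_rpow (sq_nonneg _) (by linarith) (by norm_num)

/-- A radial function integrates over the unit ball in polar coordinates to at most the integral
of any bound for the weighted profile. -/
theorem setIntegral_ball_sq_le_of_radial [Nontrivial E] {M : E → ℝ}
    (hM : ∀ x y, ‖x‖ = ‖y‖ → M x = M y) {e : E} (he : ‖e‖ = 1) {g : ℝ → ℝ}
    (hgi : IntegrableOn g (Set.Ioo 0 1))
    (hg : ∀ x : E, x ≠ 0 → ‖x‖ ^ (Module.finrank ℝ E - 1) * M x ^ 2 ≤ g ‖x‖) :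
    ∫ x in Metric.ball (0 : E) 1, M x ^ 2 ≤
      Module.finrank ℝ E * (volume.real (Metric.ball (0 : E) 1) * ∫ r in Set.Ioo 0 1, g r) := by
  set k : ℝ → ℝ := (Set.Iio 1).indicator fun r ↦ M (r • e) ^ 2 with hk
  have h1 : ∫ x in Metric.ball (0 : E) 1, M x ^ 2 = ∫ x : E, k ‖x‖ := by
    rw [← integral_indicator Metric.isOpen_ball.measurableSet]
    refine integral_congr_ae (Filter.Eventually.of_forall fun x ↦ ?_)
    simp only [hk, Set.indicator, mem_ball_zero_iff, Set.mem_Iio]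
    rw [hM x (‖x‖ • e) (by rw [norm_smul, norm_norm, he, mul_one])]
  rw [h1, integral_fun_norm_addHaar volume k, nsmul_eq_mul, smul_eq_mul]
  refine mul_le_mul_of_nonneg_left (mul_le_mul_of_nonneg_left ?_ measureReal_nonneg)
    (Nat.cast_nonneg _)
  have h2 : ∫ r in Set.Ioo (0 : ℝ) 1, g r = ∫ r in Set.Ioi 0, (Set.Iio 1).indicator g r := by
    rw [setIntegral_indicator measurableSet_Iio, Set.Ioi_inter_Iio]
  rw [h2]
  refine integral_mono_of_nonneg ?_ ?_ ?_
  · filter_upwards [ae_restrict_mem measurableSet_Ioi] with r hr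
    have hr : 0 < r := hr
    exact mul_nonneg (by positivity) (Set.indicator_nonneg (fun _ _ ↦ sq_nonneg _) _)
  · rw [integrable_indicator_iff measurableSet_Iio, IntegrableOn,
      Measure.restrict_restrict measurableSet_Iio, Set.inter_comm, Set.Ioi_inter_Iio]
    exact hgi
  · filter_upwards [ae_restrict_mem measurableSet_Ioi] with r hr
    have hr : 0 < r := hr
    by_cases h3 : r < 1
    · have hn : ‖r • e‖ = r := by rw [norm_smul, he, mul_one, Real.norm_of_nonneg hr.le]
      have h4 := hg (r • e) (norm_pos_iff.1 (by rw [hn]; exact hr))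
      rw [hn] at h4
      simpa [hk, Set.indicator, h3] using h4
    · simp [hk, Set.indicator, h3]

theorem exists_integral_iSup_osc_le {a : ℝ} (ha : 1 < a) (hE : 2 ≤ Module.finrank ℝ E) :
    ∃ C > 0, ∀ h : SchwartzMap E ℂ, (∀ x y, ‖x‖ = ‖y‖ → h x = h y) →
      ∫ x in Metric.ball (0 : E) 1, (⨆ t : Set.Ioo (-1 : ℝ) 1, ‖osc a h x t‖) ^ 2 ≤
        C * ∫ ξ, (1 + ‖ξ‖ ^ 2) ^ (1 / 4 : ℝ) * ‖h ξ‖ ^ 2 := by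
  have : Nontrivial E := Module.nontrivial_of_finrank_pos (R := ℝ) (by omega)
  set d := Module.finrank ℝ E with hd
  set i₀ : Fin (Module.finrank ℝ E) := ⟨0, by omega⟩
  set e : E := stdOrthonormalBasis ℝ E i₀
  have he : ‖e‖ = 1 := (stdOrthonormalBasis ℝ E).norm_eq_one i₀
  obtain ⟨α, β, K, hK, hφ⟩ := exists_asymptotics_sphAvg (stdOrthonormalBasis ℝ E) i₀
    (by rw [Fintype.card_fin]; exact hE)
  rw [Fintype.card_fin] at hφ
  obtain ⟨A, hA, HA⟩ := exists_lintegral_iSup_oscInt_le (b := 2 * a) (by linarith)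
  refine ⟨6 * d ^ 2 * ((‖α‖ ^ 2 + ‖β‖ ^ 2) * A + 2 * (K ^ 2 * π)), by
    have : 0 < (d : ℝ) := by exact_mod_cast (by omega : 0 < d)
    have := Real.pi_pos
    positivity, fun h hh ↦ ?_⟩
  set G := radialAmp h e with hG
  have hGm : Measurable G := (continuous_radialAmp h.continuous e).measurable
  have hG1 : IntegrableOn G (Set.Ioi 0) := integrableOn_radialAmp h he
  have hG2 : IntegrableOn (fun η ↦ ‖G η‖ ^ 2) (Set.Ioi 0) := integrableOn_norm_sq_radialAmp h he
  set N := ∫ η in Set.Ioi 0, ‖G η‖ ^ 2 with hN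
  have hN0 : 0 ≤ N := integral_nonneg fun η ↦ sq_nonneg _
  set U := oscSup (2 * a) G with hU
  have hUm : Measurable U := measurable_oscSup (by linarith) hGm
  have hUlt : ∀ x, U x < ⊤ := oscSup_lt_top _ hG1
  have hUle : ∫⁻ x in Set.Ioo (-1 : ℝ) 1, U x ≤ ENNReal.ofReal (A * N) :=
    HA (TopologicalSpace.denseSeq ℝ) G hGm hG1 hG2
  have hU1 := integrableOn_and_setIntegral_le_of_lintegral_le hUm hUlt (S := Set.Ioo 0 1)
    (B := A * N) (by positivity)
    ((lintegral_mono_set (Set.Ioo_subset_Ioo_left (by norm_num))).trans hUle)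
  have hU2 := integrableOn_and_setIntegral_le_of_lintegral_le (U := fun x ↦ U (-x))
    (hUm.comp measurable_neg) (fun x ↦ hUlt _) (S := Set.Ioo 0 1) (B := A * N) (by positivity)
    (by
      have := (Measure.measurePreserving_neg (volume : Measure ℝ)).setLIntegral_comp_preimage
        (measurableSet_Ioo (a := (-1 : ℝ)) (b := 1)) hUm
      refine le_trans (lintegral_mono_set fun x hx ↦ ?_) (this.trans_le hUle)
      simp only [Set.mem_preimage, Set.mem_Ioo] at hx ⊢
      constructor <;> linarith)
  set g : ℝ → ℝ := fun ρ ↦ 3 * (d : ℝ) ^ 2 * ((‖α‖ ^ 2 * (U ρ).toReal +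
    ‖β‖ ^ 2 * (U (-ρ)).toReal) + K ^ 2 * π * N * ρ ^ (-(1 / 2) : ℝ)) with hg
  have i1 : IntegrableOn (fun ρ ↦ ‖α‖ ^ 2 * (U ρ).toReal) (Set.Ioo 0 1) := hU1.1.const_mul _
  have i2 : IntegrableOn (fun ρ ↦ ‖β‖ ^ 2 * (U (-ρ)).toReal) (Set.Ioo 0 1) := hU2.1.const_mul _
  have i3 : IntegrableOn (fun ρ ↦ K ^ 2 * π * N * ρ ^ (-(1 / 2) : ℝ)) (Set.Ioo 0 1) :=
    integrableOn_rpow_neg_half.const_mul _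
  have i12 : IntegrableOn (fun ρ ↦ ‖α‖ ^ 2 * (U ρ).toReal + ‖β‖ ^ 2 * (U (-ρ)).toReal)
    (Set.Ioo 0 1) := i1.add i2
  have i123 : IntegrableOn (fun ρ ↦ (‖α‖ ^ 2 * (U ρ).toReal + ‖β‖ ^ 2 * (U (-ρ)).toReal) +
    K ^ 2 * π * N * ρ ^ (-(1 / 2) : ℝ)) (Set.Ioo 0 1) := i12.add i3
  have hgi : IntegrableOn g (Set.Ioo 0 1) := i123.const_mul _
  have hgint : ∫ ρ in Set.Ioo 0 1, g ρ ≤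
      3 * (d : ℝ) ^ 2 * ((‖α‖ ^ 2 + ‖β‖ ^ 2) * A + 2 * (K ^ 2 * π)) * N := by
    rw [hg, integral_const_mul, integral_add i12 i3, integral_add i1 i2, integral_const_mul,
      integral_const_mul, integral_const_mul, setIntegral_rpow_neg_half, mul_assoc (3 * (d : ℝ) ^ 2)]
    refine mul_le_mul_of_nonneg_left ?_ (mul_nonneg zero_le_three (sq_nonneg _))
    have e1 := mul_le_mul_of_nonneg_left hU1.2 (sq_nonneg ‖α‖)
    have e2 := mul_le_mul_of_nonneg_left hU2.2 (sq_nonneg ‖β‖)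
    linarith
  have hφm : Measurable fun s : ℝ ↦ ((s ^ (((d : ℝ) - 1) / 2) : ℝ) : ℂ) * sphAvg (s • e) :=
    (Complex.measurable_ofReal.comp (measurable_id.pow_const _)).mul
      (continuous_sphAvg.comp (continuous_id.smul (continuous_const (y := e)))).measurable
  have hpt : ∀ x : E, x ≠ 0 → ∀ t : ℝ, ‖x‖ ^ (d - 1) * ‖osc a h x t‖ ^ 2 ≤ g ‖x‖ := by
    intro x hx
    have hρ : 0 < ‖x‖ := norm_pos_iff.2 hx
    have hdense : ∀ k, ‖x‖ ^ (d - 1) * ‖osc a h x (TopologicalSpace.denseSeq ℝ k)‖ ^ 2 ≤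
        g ‖x‖ := fun k ↦ by
      set t := TopologicalSpace.denseSeq ℝ k
      have h1 := rpow_mul_osc_eq a h.integrable hh he hx t
      have h2 := norm_integral_mul_oscFactor_le (b := 2 * a) (by linarith) hρ hK.le hφm hφ hGm
        hG1 t
      have h3 := congrArg (fun z ↦ ‖z‖ ^ 2) h1
      simp only [norm_mul, mul_pow, Complex.norm_real, Complex.norm_natCast] at h3
      have h4 : ‖‖x‖ ^ (((Module.finrank ℝ E : ℝ) - 1) / 2)‖ ^ 2 = ‖x‖ ^ (d - 1) := by
        rw [Real.norm_of_nonneg (by positivity), ← Real.rpow_natCast, ← Real.rpow_mul hρ.le,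
          ← Real.rpow_natCast, Nat.cast_sub (by omega)]
        congr 1
        push_cast
        ring
      rw [h4] at h3
      rw [h3]
      have h5 := pow_le_pow_left₀ (norm_nonneg _) h2 2
      have h6 := norm_sq_oscInt_le (2 * a) hG1 ‖x‖ k
      have h7 := norm_sq_oscInt_le (2 * a) hG1 (-‖x‖) k
      have h8 := sq_integral_inv_mul_norm_le hρ hK.le hGm hG2
      have h9 : ∀ u v w : ℝ, (u + v + w) ^ 2 ≤ 3 * (u ^ 2 + v ^ 2 + w ^ 2) := fun u v w ↦ by
        nlinarith [sq_nonneg (u - v), sq_nonneg (v - w), sq_nonneg (u - w)]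
      have h10 := h5.trans (h9 _ _ _)
      rw [mul_pow, mul_pow] at h10
      have h11 := mul_le_mul_of_nonneg_left h6 (sq_nonneg ‖α‖)
      have h12 := mul_le_mul_of_nonneg_left h7 (sq_nonneg ‖β‖)
      have h13 := h10.trans (show _ ≤ 3 * ((‖α‖ ^ 2 * (U ‖x‖).toReal +
        ‖β‖ ^ 2 * (U (-‖x‖)).toReal) + K ^ 2 * π * N * ‖x‖ ^ (-(1 / 2) : ℝ)) by linarith)
      refine (mul_le_mul_of_nonneg_left h13 (sq_nonneg (d : ℝ))).trans (le_of_eq ?_)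
      simp only [hg]
      ring
    intro t
    have hcl : IsClosed {t : ℝ | ‖x‖ ^ (d - 1) * ‖osc a h x t‖ ^ 2 ≤ g ‖x‖} :=
      isClosed_le (continuous_const.mul ((continuous_osc a h.integrable x).norm.pow 2))
        continuous_const
    have hsub : Set.range (TopologicalSpace.denseSeq ℝ) ⊆
        {t : ℝ | ‖x‖ ^ (d - 1) * ‖osc a h x t‖ ^ 2 ≤ g ‖x‖} := by
      rintro _ ⟨k, rfl⟩
      exact hdense k
    have huniv := (Dense.mono hsub (TopologicalSpace.denseRange_denseSeq ℝ)).closure_eq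
    rw [hcl.closure_eq] at huniv
    exact huniv.ge (Set.mem_univ t)
  have hball := setIntegral_ball_sq_le_of_radial
    (M := fun x ↦ ⨆ t : Set.Ioo (-1 : ℝ) 1, ‖osc a h x t‖)
    (fun x y hxy ↦ by simp only [osc_eq_of_norm_eq a hh hxy]) he hgi (fun x hx ↦ by
      have hρ : 0 < ‖x‖ ^ (d - 1) := pow_pos (norm_pos_iff.2 hx) _
      have hne : Nonempty (Set.Ioo (-1 : ℝ) 1) := ⟨⟨0, by norm_num⟩⟩
      have h1 : (⨆ t : Set.Ioo (-1 : ℝ) 1, ‖osc a h x t‖) ≤ √(g ‖x‖ / ‖x‖ ^ (d - 1)) :=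
        ciSup_le fun t ↦ Real.le_sqrt_of_sq_le (by
          rw [le_div_iff₀ hρ, mul_comm]; exact hpt x hx t)
      have h0 : 0 ≤ ⨆ t : Set.Ioo (-1 : ℝ) 1, ‖osc a h x t‖ :=
        Real.iSup_nonneg fun t ↦ norm_nonneg _
      have hg0 : 0 ≤ g ‖x‖ := le_trans (by positivity) (hpt x hx 0)
      have h2 := pow_le_pow_left₀ h0 h1 2
      rw [Real.sq_sqrt (by positivity), le_div_iff₀ hρ, mul_comm] at h2
      exact h2)
  have hnorm := integral_norm_sq_radialAmp hh he
  have hle := integral_rpow_half_mul_le h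
  rw [← hd, ← hN] at hnorm
  set c := (‖α‖ ^ 2 + ‖β‖ ^ 2) * A + 2 * (K ^ 2 * π) with hc
  have hc0 : 0 ≤ c := by
    have := Real.pi_pos
    positivity
  calc _ ≤ _ := hball
    _ ≤ d * (volume.real (Metric.ball (0 : E) 1) * (3 * (d : ℝ) ^ 2 * c * N)) := by
      refine mul_le_mul_of_nonneg_left (mul_le_mul_of_nonneg_left hgint measureReal_nonneg)
        (Nat.cast_nonneg _)
    _ = 3 * (d : ℝ) ^ 2 * c * (d * (volume.real (Metric.ball (0 : E) 1) * N)) := by ring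
    _ = 6 * d ^ 2 * c * ∫ ξ, ‖ξ‖ ^ (1 / 2 : ℝ) * ‖h ξ‖ ^ 2 := by rw [hnorm]; ring
    _ ≤ _ := mul_le_mul_of_nonneg_left hle (by positivity)

end Maximal

theorem FT_eq_fourier (n : ℕ) (f : EuclideanSpace ℝ (Fin n) → ℂ) (ξ : EuclideanSpace ℝ (Fin n)) :
    FT n f ξ = FourierTransform.fourier f ((2 * π)⁻¹ • ξ) := by
  rw [Real.fourier_eq, FT]
  refine integral_congr_ae (Filter.Eventually.of_forall fun x ↦ ?_)
  have hπ : (2 * π) ≠ 0 := by positivity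
  simp only [Circle.smul_def, Real.fourierChar_apply, smul_eq_mul, real_inner_smul_right]
  congr 2
  rw [show 2 * π * -((2 * π)⁻¹ * ⟪x, ξ⟫_ℝ) = -⟪x, ξ⟫_ℝ by field_simp]
  push_cast
  ring

theorem exists_schwartzMap_eq_FT {n : ℕ} {f : EuclideanSpace ℝ (Fin n) → ℂ}
    (hf : ContDiff ℝ (⊤ : ℕ∞) f) (hc : HasCompactSupport f) :
    ∃ h : SchwartzMap (EuclideanSpace ℝ (Fin n)) ℂ, ⇑h = FT n f := by
  have hπ : (2 * π)⁻¹ ≠ 0 := by positivity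
  refine ⟨SchwartzMap.compCLMOfContinuousLinearEquiv ℂ
    (ContinuousLinearEquiv.smulLeft (Units.mk0 (2 * π)⁻¹ hπ))
    (FourierTransform.fourier (hc.toSchwartzMap hf)), ?_⟩
  ext ξ
  rw [FT_eq_fourier, SchwartzMap.compCLMOfContinuousLinearEquiv_apply, SchwartzMap.fourier_coe]
  rfl

theorem FT_eq_of_norm_eq {n : ℕ} {f : EuclideanSpace ℝ (Fin n) → ℂ}
    (hf : ∀ x y : EuclideanSpace ℝ (Fin n), ‖x‖ = ‖y‖ → f x = f y)
    {ξ η : EuclideanSpace ℝ (Fin n)} (h : ‖ξ‖ = ‖η‖) : FT n f ξ = FT n f η := by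
  have e : ∀ ζ, FT n f ζ = ∫ x, Complex.exp (Complex.I * ((⟪-ζ, x⟫_ℝ : ℝ) : ℂ)) * f x := fun ζ ↦ by
    refine integral_congr_ae (Filter.Eventually.of_forall fun x ↦ ?_)
    simp only [inner_neg_left, real_inner_comm, Complex.ofReal_neg, mul_neg]
  rw [e, e]
  exact integral_exp_inner_mul_eq_of_norm_eq hf (by rw [norm_neg, norm_neg, h])

theorem norm_Sosc (n : ℕ) (a : ℝ) (f : EuclideanSpace ℝ (Fin n) → ℂ)
    (x : EuclideanSpace ℝ (Fin n)) (t : ℝ) :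
    ‖Sosc n a f x t‖ = ((2 * π) ^ n)⁻¹ * ‖osc a (FT n f) x t‖ := by
  have : 0 < (2 * π) ^ n := by positivity
  rw [Sosc, norm_mul, norm_inv, Complex.norm_real, Real.norm_of_nonneg this.le]
  rfl

theorem stmt7 (a : ℝ) (ha : 1 < a) (n : ℕ) (hn : 2 ≤ n) :
    ∃ C > 0, ∀ f : EuclideanSpace ℝ (Fin n) → ℂ,
      ContDiff ℝ (⊤ : ℕ∞) f → HasCompactSupport f → 0 ∉ tsupport f →
      (∀ x y : EuclideanSpace ℝ (Fin n), ‖x‖ = ‖y‖ → f x = f y) →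
      (∫ x in Metric.ball (0 : EuclideanSpace ℝ (Fin n)) 1,
          (⨆ t : Set.Ioo (-1 : ℝ) 1, ‖Sosc n a f x t‖) ^ 2) ^ (1/2 : ℝ)
        ≤ C * (∫ ξ, (1 + ‖ξ‖ ^ 2) ^ (1/4 : ℝ) * ‖FT n f ξ‖ ^ 2) ^ (1/2 : ℝ) := by
  obtain ⟨C, hC, H⟩ := exists_integral_iSup_osc_le (E := EuclideanSpace ℝ (Fin n)) ha
    (by rw [finrank_euclideanSpace_fin]; exact hn)
  set c : ℝ := ((2 * π) ^ n)⁻¹ with hc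
  have hc0 : 0 < c := by positivity
  refine ⟨(c ^ 2 * C) ^ (1 / 2 : ℝ), by positivity, fun f hf hcs _ hrad ↦ ?_⟩
  obtain ⟨h, hh⟩ := exists_schwartzMap_eq_FT hf hcs
  have hmain := H h fun x y hxy ↦ by rw [hh]; exact FT_eq_of_norm_eq hrad hxy
  rw [hh] at hmain
  have hI : 0 ≤ ∫ ξ, (1 + ‖ξ‖ ^ 2) ^ (1 / 4 : ℝ) * ‖FT n f ξ‖ ^ 2 :=
    integral_nonneg fun ξ ↦ by positivity
  rw [← Real.mul_rpow (by positivity) hI]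
  refine Real.rpow_le_rpow (integral_nonneg fun x ↦ sq_nonneg _) ?_ (by norm_num)
  simp only [norm_Sosc, ← hc, ← Real.mul_iSup_of_nonneg hc0.le]
  simp only [mul_pow c]
  rw [integral_const_mul, mul_assoc]
  exact mul_le_mul_of_nonneg_left hmain (sq_nonneg c)
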